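/- arXiv:2412.03482 — 3 statements merged into one kernel-verified Lean document; each statement's English description precedes it below -/
import Mathlib

section
/- Let (R_i)_{i∈I} be an infinite family of pairwise disjoint equivalent out-rays in a digraph D, and for each i ∈ I let v_i be a vertex of R_i. Then there exist an infinite subset J ⊆ I and an out-ray S in D such that for every j ∈ J, the ray S avoids the initial segment of R_j up to v_j, and S intersects R_j in infinitely many vertices. -/
variable {V : Type*}

/-- An out-ray: a one-way infinite directed path oriented away from its start. -/
def IsOutRay (D : Digraph V) (f : ℕ → V) : Prop :=
  Function.Injective f ∧ ∀ n, D.Adj (f n) (f (n + 1))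

/-- An in-ray: a one-way infinite directed path oriented towards its start. -/
def IsInRay (D : Digraph V) (f : ℕ → V) : Prop :=
  Function.Injective f ∧ ∀ n, D.Adj (f (n + 1)) (f n)

/-- A finite directed path, given as a nonempty duplicate-free list of vertices. -/
def IsDipath (D : Digraph V) (p : List V) : Prop :=
  p ≠ [] ∧ p.Nodup ∧ p.Chain' D.Adj

def StartsIn (p : List V) (A : Set V) : Prop := ∃ a ∈ A, p.head? = some a

def EndsIn (p : List V) (B : Set V) : Prop := ∃ b ∈ B, p.getLast? = some b

def ListsDisjoint (p q : List V) : Prop := ∀ v ∈ p, v ∉ q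

/-- There are infinitely many pairwise disjoint directed A–B paths. -/
def ManyDisjointPaths (D : Digraph V) (A B : Set V) : Prop :=
  ∃ P : ℕ → List V,
    (∀ n, IsDipath D (P n) ∧ StartsIn (P n) A ∧ EndsIn (P n) B) ∧
    ∀ m n, m ≠ n → ListsDisjoint (P m) (P n)

/-- Two rays are equivalent: infinitely many disjoint paths in both directions. -/
def EquivRays (D : Digraph V) (R₁ R₂ : ℕ → V) : Prop :=
  ManyDisjointPaths D (Set.range R₁) (Set.range R₂) ∧
  ManyDisjointPaths D (Set.range R₂) (Set.range R₁)

/-!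
The ray is built from finite approximations: a finite path that can be continued along the tail of
some `R i`, together with a finite set of vertices it promises to avoid. Of infinitely many disjoint
paths from `R i` to `R j` all but finitely many miss any given finite set, so an approximation can
be extended, to any desired length, to one ending on any prescribed `R j`. As the `R j` are
disjoint, all but finitely many of them miss the current path, so the initial segment of a new ray
can always be added to the avoided set. For countable `I` these are countably many requirements,
each met by a cofinal set of approximations; as in the Rasiowa–Sikorski lemma, an increasing
sequence meets them all, and its paths converge to a ray hitting every `R i` infinitely often.
-/

section Paths

variable {D : Digraph V} {A B X : Set V}

theorem manyDisjointPaths_range_self {f : ℕ → V} (hf : Function.Injective f) :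
    ManyDisjointPaths D (Set.range f) (Set.range f) := by
  refine ⟨fun n => [f n], fun n => ⟨⟨by simp, by simp, List.isChain_singleton _⟩, ?_, ?_⟩, ?_⟩
  · exact ⟨f n, ⟨n, rfl⟩, rfl⟩
  · exact ⟨f n, ⟨n, rfl⟩, rfl⟩
  · intro m n hmn
    simpa [ListsDisjoint] using hf.ne hmn

theorem ManyDisjointPaths.exists_avoiding (h : ManyDisjointPaths D A B) (hX : X.Finite) :
    ∃ p, IsDipath D p ∧ StartsIn p A ∧ EndsIn p B ∧ ∀ x ∈ p, x ∉ X := by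
  obtain ⟨P, hP, hdisj⟩ := h
  by_contra! hmeets
  choose f hfP hfX using fun n => hmeets (P n) (hP n).1 (hP n).2.1 (hP n).2.2
  have hinj : Function.Injective f := by
    intro m n hmn
    by_contra hne
    exact hdisj m n hne (f m) (hfP m) (hmn ▸ hfP n)
  exact Set.infinite_of_injective_forall_mem hinj hfX hX

/-- The edges of `D` whose head lies outside `X`. The tail may lie in `X`, so that a path already
built can be put into `X` and still be continued from its last vertex. -/
def AdjAvoiding (D : Digraph V) (X : Set V) (x y : V) : Prop :=
  D.Adj x y ∧ y ∉ X

theorem notMem_of_isChain_adjAvoiding {a : V} {l : List V}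
    (h : (a :: l).IsChain (AdjAvoiding D X)) : ∀ x ∈ l, x ∉ X := by
  induction l generalizing a with
  | nil => simp
  | cons b l ih =>
    obtain ⟨hab, hbl⟩ := List.isChain_cons_cons.1 h
    exact List.forall_mem_cons.2 ⟨hab.2, ih hbl⟩

theorem IsDipath.reflTransGen_adjAvoiding {p : List V} (hp : IsDipath D p) {a b : V}
    (ha : p.head? = some a) (hb : p.getLast? = some b) (hpX : ∀ x ∈ p, x ∉ X) :
    Relation.ReflTransGen (AdjAvoiding D X) a b := by
  obtain ⟨hne, -, hchain⟩ := hp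
  have hchain' : p.IsChain (AdjAvoiding D X) :=
    List.IsChain.imp_of_mem_imp (fun x y _ hy hxy => ⟨hxy, hpX y hy⟩) hchain
  rw [List.head?_eq_some_head hne, Option.some_inj] at ha
  rw [List.getLast?_eq_some_getLast hne, Option.some_inj] at hb
  exact ha ▸ hb ▸ List.relationReflTransGen_of_exists_isChain p hchain' hne

theorem IsOutRay.reflTransGen_adjAvoiding {f : ℕ → V} (hf : IsOutRay D f) {m n : ℕ} (hmn : m ≤ n)
    (htail : ∀ k > m, f k ∉ X) : Relation.ReflTransGen (AdjAvoiding D X) (f m) (f n) :=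
  (reflTransGen_of_succ_of_le (fun i j => AdjAvoiding D X (f i) (f j))
    (fun k hk => ⟨hf.2 k, htail _ (Nat.lt_succ_of_le hk.1)⟩) hmn).lift f fun _ _ h => h

theorem exists_nodup_isChain_to_first_mem {r : V → V → Prop} {a b : V}
    (h : Relation.ReflTransGen r a b) (hb : b ∈ B) :
    ∃ l, (a :: l).IsChain r ∧ (a :: l).Nodup ∧
      ∃ c ∈ B, (a :: l).getLast? = some c ∧ ∀ x ∈ a :: l, x ∈ B → x = c := by
  induction h using Relation.ReflTransGen.head_induction_on with
  | refl => exact ⟨[], by simp, by simp, b, hb, by simp, by simp⟩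
  | @head a a' haa' _ ih =>
    obtain ⟨l, hchain, hnodup, c, hc, hlast, hfirst⟩ := ih
    by_cases haB : a ∈ B
    · exact ⟨[], by simp, by simp, a, haB, by simp, by simp⟩
    by_cases hal : a ∈ a' :: l
    · obtain ⟨l₁, l₂, hl⟩ := List.append_of_mem hal
      rw [hl] at hchain hnodup hlast hfirst
      exact ⟨l₂, hchain.right_of_append, hnodup.of_append_right, c, hc, by simpa using hlast,
        fun x hx => hfirst x (List.mem_append_right _ hx)⟩
    · refine ⟨a' :: l, hchain.cons_cons haa', hnodup.cons hal, c, hc, by simpa using hlast, ?_⟩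
      exact List.forall_mem_cons.2 ⟨fun h => absurd h haB, hfirst⟩

theorem IsOutRay.exists_isChain_to_range {f g : ℕ → V} (hf : IsOutRay D f)
    (hg : Function.Injective g) (hfg : ManyDisjointPaths D (Set.range f) (Set.range g))
    (hX : X.Finite) {m : ℕ} (hm : f m ∈ X) (htail : ∀ n > m, f n ∉ X) :
    ∃ l, (f m :: l).IsChain D.Adj ∧ l.Nodup ∧ (∀ x ∈ l, x ∉ X) ∧
      ∃ w, l.getLast? = some (g w) ∧ ∀ n > w, g n ∉ X ∧ g n ∉ l := by
  obtain ⟨N, hN⟩ : ∃ N, ∀ n > N, g n ∉ X :=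
    (hX.preimage hg.injOn).bddAbove.imp fun N hN n hn hgn => hn.not_ge (hN hgn)
  obtain ⟨p, hp, ⟨_, ⟨s, rfl⟩, hhead⟩, ⟨_, ⟨t, rfl⟩, hlast⟩, hpX⟩ :=
    hfg.exists_avoiding
      (hX.union (((Set.finite_Iic m).image f).union ((Set.finite_Iic N).image g)))
  have hs : m < s := not_le.1 fun h =>
    hpX _ (List.mem_of_head? hhead) (.inr (.inl ⟨s, h, rfl⟩))
  have ht : N < t := not_le.1 fun h =>
    hpX _ (List.mem_of_getLast? hlast) (.inr (.inr ⟨t, h, rfl⟩))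
  have hreach : Relation.ReflTransGen (AdjAvoiding D X) (f m) (g t) :=
    (hf.reflTransGen_adjAvoiding hs.le htail).trans
      (hp.reflTransGen_adjAvoiding hhead hlast fun x hx hxX => hpX x hx (.inl hxX))
  -- Stopping at the first vertex of the tail of `g` beyond `N` keeps the rest of that tail free.
  obtain ⟨l, hchain, hnodup, _, ⟨w, hw, rfl⟩, hend, hfirst⟩ :=
    exists_nodup_isChain_to_first_mem hreach (B := g '' Set.Ioi N) ⟨t, ht, rfl⟩
  have hl : l ≠ [] := by
    rintro rfl
    have hfm : f m = g w := by simpa using hend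
    exact hN w hw (hfm ▸ hm)
  refine ⟨l, hchain.imp fun _ _ h => h.1, hnodup.of_cons,
    notMem_of_isChain_adjAvoiding hchain, w, ?_, fun n hn => ?_⟩
  · rwa [List.getLast?_cons_of_ne_nil hl] at hend
  · have hNn : N < n := lt_trans hw hn
    refine ⟨hN n hNn, fun hnl => hn.ne' (hg ?_)⟩
    exact hfirst _ (List.mem_cons_of_mem _ hnl) ⟨n, hNn, rfl⟩

theorem exists_isOutRay_of_isPrefix {P : ℕ → List V} (hP : ∀ n, IsDipath D (P n))
    (hmono : ∀ m n, m ≤ n → P m <+: P n) (hlen : ∀ k, ∃ n, k < (P n).length) :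
    ∃ S, IsOutRay D S ∧ ∀ n k (h : k < (P n).length), S k = (P n)[k] := by
  choose N hN using hlen
  let S : ℕ → V := fun k => (P (N k))[k]'(hN k)
  have hS : ∀ n k (h : k < (P n).length), S k = (P n)[k] := by
    intro n k h
    rcases le_total n (N k) with hle | hle
    · exact ((hmono _ _ hle).getElem h).symm
    · exact (hmono _ _ hle).getElem (hN k)
  refine ⟨S, ⟨fun a b hab => ?_, fun k => ?_⟩, hS⟩
  · have hlt := hN (max a b)
    have ha := (le_max_left a b).trans_lt hlt
    have hb := (le_max_right a b).trans_lt hlt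
    rw [hS _ a ha, hS _ b hb] at hab
    exact (hP _).2.1.getElem_inj_iff.1 hab
  · have hlt := hN (k + 1)
    rw [hS _ k (Nat.lt_of_succ_lt hlt), hS _ (k + 1) hlt]
    exact List.isChain_iff_getElem.1 (hP _).2.2 k hlt

end Paths

theorem finite_setOf_not_disjoint {ι α : Type*} {s : ι → Set α}
    (hs : Pairwise (Function.onFun Disjoint s)) {t : Set α} (ht : t.Finite) :
    {i | ¬Disjoint (s i) t}.Finite := by
  have hsub : {i | ¬Disjoint (s i) t} ⊆ ⋃ x ∈ t, {i | x ∈ s i} := by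
    intro i hi
    obtain ⟨x, hxs, hxt⟩ := Set.not_disjoint_iff.1 hi
    exact Set.mem_biUnion hxt hxs
  refine (ht.biUnion fun x _ => Set.Subsingleton.finite ?_).subset hsub
  intro i hi j hj
  by_contra hij
  exact (hs hij).notMem_of_mem_left hi hj

/-- A finite approximation to the out-ray to be built along the rays `R i`: an initial path of it,
together with a finite set of vertices it promises never to use. The path ends on some `R i` whose
remaining tail is still free, so that it can always be continued. -/
structure RayApprox {I : Type*} (D : Digraph V) (R : I → ℕ → V) where
  path : List V
  avoided : Set V
  isDipath : IsDipath D path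
  finite_avoided : avoided.Finite
  notMem_avoided : ∀ x ∈ path, x ∉ avoided
  exists_tail : ∃ i m, path.getLast? = some (R i m) ∧ ∀ n > m, R i n ∉ path ∧ R i n ∉ avoided

namespace RayApprox

variable {I : Type*} {D : Digraph V} {R : I → ℕ → V}

instance : Preorder (RayApprox D R) where
  le c d := c.path <+: d.path ∧ c.avoided ⊆ d.avoided
  le_refl c := ⟨List.prefix_refl _, subset_rfl⟩
  le_trans _ _ _ h h' := ⟨h.1.trans h'.1, h.2.trans h'.2⟩

theorem nonempty [Nonempty I] (hR : ∀ i, Function.Injective (R i)) : Nonempty (RayApprox D R) := by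
  obtain ⟨i⟩ := ‹Nonempty I›
  exact ⟨{
    path := [R i 0]
    avoided := ∅
    isDipath := ⟨by simp, by simp, List.isChain_singleton _⟩
    finite_avoided := Set.finite_empty
    notMem_avoided := fun _ _ => Set.notMem_empty _
    exists_tail := ⟨i, 0, rfl, fun n hn => by simpa using (hR i).ne hn.ne'⟩ }⟩

theorem exists_ge_getLast_mem_range (hray : ∀ i, IsOutRay D (R i))
    (hpaths : ∀ i j, ManyDisjointPaths D (Set.range (R i)) (Set.range (R j)))
    (c : RayApprox D R) (j : I) :
    ∃ d ≥ c, c.path.length < d.path.length ∧ ∃ w, d.path.getLast? = some (R j w) := by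
  obtain ⟨i, m, hlast, htail⟩ := c.exists_tail
  obtain ⟨l, hchain, hnodup, hl, w, hw, hwtail⟩ :=
    (hray i).exists_isChain_to_range (hray j).1 (hpaths i j) (X := {x | x ∈ c.path} ∪ c.avoided)
      (c.path.finite_toSet.union c.finite_avoided) (.inl (List.mem_of_getLast? hlast))
      (fun n hn => not_or.2 (htail n hn))
  rw [List.isChain_cons] at hchain
  have hdipath : IsDipath D (c.path ++ l) := by
    refine ⟨List.append_ne_nil_of_left_ne_nil c.isDipath.1 l, ?_, ?_⟩
    · exact c.isDipath.2.1.append hnodup fun x hx hxl => hl x hxl (.inl hx)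
    · refine List.IsChain.append c.isDipath.2.2 hchain.2 fun x hx => ?_
      rw [hlast, Option.mem_some_iff] at hx
      exact hx ▸ hchain.1
  have hend : (c.path ++ l).getLast? = some (R j w) := by
    rw [List.getLast?_append, hw, Option.some_or]
  refine ⟨{
    path := c.path ++ l
    avoided := c.avoided
    isDipath := hdipath
    finite_avoided := c.finite_avoided
    notMem_avoided := fun x hx => (List.mem_append.1 hx).elim (c.notMem_avoided x)
      fun hxl hxa => hl x hxl (.inr hxa)
    exists_tail := ⟨j, w, hend, fun n hn => ?_⟩ },
    ⟨List.prefix_append _ _, subset_rfl⟩, ?_, w, hend⟩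
  · obtain ⟨hX, hnl⟩ := hwtail n hn
    exact ⟨fun h => (List.mem_append.1 h).elim (fun h => hX (.inl h)) hnl, fun h => hX (.inr h)⟩
  · have hl : l ≠ [] := by rintro rfl; simp at hw
    simpa using List.length_pos_iff.2 hl

theorem exists_ge_lt_length (hray : ∀ i, IsOutRay D (R i))
    (hpaths : ∀ i j, ManyDisjointPaths D (Set.range (R i)) (Set.range (R j)))
    (c : RayApprox D R) (j : I) (n : ℕ) :
    ∃ d ≥ c, n < d.path.length ∧ ∃ w, d.path.getLast? = some (R j w) := by
  induction n with
  | zero =>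
    obtain ⟨d, hcd, hlen, hend⟩ := c.exists_ge_getLast_mem_range hray hpaths j
    exact ⟨d, hcd, hlen.pos, hend⟩
  | succ n ih =>
    obtain ⟨d, hcd, hlen, -⟩ := ih
    obtain ⟨e, hde, hlen', hend⟩ := d.exists_ge_getLast_mem_range hray hpaths j
    exact ⟨e, hcd.trans hde, by omega, hend⟩

theorem exists_ge_image_Iic_subset_avoided [Infinite I]
    (hdisj : Pairwise (Function.onFun Disjoint fun i => Set.range (R i)))
    (v : I → ℕ) (c : RayApprox D R) (F : Finset I) :
    ∃ d ≥ c, ∃ j ∉ F, R j '' Set.Iic (v j) ⊆ d.avoided := by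
  obtain ⟨j, hj⟩ :=
    (F.finite_toSet.union (finite_setOf_not_disjoint hdisj c.path.finite_toSet)).exists_notMem
  simp only [Set.mem_union, not_or, Set.mem_ofPred_eq, not_not] at hj
  obtain ⟨hjF, hjpath⟩ := hj
  obtain ⟨i, m, hlast, htail⟩ := c.exists_tail
  have hji : j ≠ i := by
    rintro rfl
    exact hjpath.notMem_of_mem_left ⟨m, rfl⟩ (List.mem_of_getLast? hlast)
  have hsub : R j '' Set.Iic (v j) ⊆ Set.range (R j) := Set.image_subset_range _ _
  refine ⟨{
    path := c.path
    avoided := c.avoided ∪ R j '' Set.Iic (v j)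
    isDipath := c.isDipath
    finite_avoided := c.finite_avoided.union ((Set.finite_Iic _).image _)
    notMem_avoided := fun x hx => not_or.2
      ⟨c.notMem_avoided x hx, fun h => hjpath.notMem_of_mem_left (hsub h) hx⟩
    exists_tail := ⟨i, m, hlast, fun n hn => ⟨(htail n hn).1, not_or.2
      ⟨(htail n hn).2, fun h => (hdisj hji).notMem_of_mem_left (hsub h) ⟨n, rfl⟩⟩⟩⟩ },
    ⟨List.prefix_refl _, Set.subset_union_left⟩, j, hjF, Set.subset_union_right⟩

theorem exists_monotone_visiting_avoiding [Countable I] [Infinite I] (hray : ∀ i, IsOutRay D (R i))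
    (hdisj : Pairwise (Function.onFun Disjoint fun i => Set.range (R i)))
    (hpaths : ∀ i j, ManyDisjointPaths D (Set.range (R i)) (Set.range (R j))) (v : I → ℕ) :
    ∃ s : ℕ → RayApprox D R, Monotone s ∧
      (∀ i n, ∃ k, n < (s k).path.length ∧ ∃ w, (s k).path.getLast? = some (R i w)) ∧
      ∀ F : Finset I, ∃ k, ∃ j ∉ F, R j '' Set.Iic (v j) ⊆ (s k).avoided := by
  have := Encodable.ofCountable I
  obtain ⟨c₀⟩ := nonempty (D := D) fun i => (hray i).1
  let visiting (i : I) (n : ℕ) : Order.Cofinal (RayApprox D R) :=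
    { carrier := {c | n < c.path.length ∧ ∃ w, c.path.getLast? = some (R i w)}
      isCofinal := fun c => (c.exists_ge_lt_length hray hpaths i n).imp fun _ h => h.symm }
  let avoiding (F : Finset I) : Order.Cofinal (RayApprox D R) :=
    { carrier := {c | ∃ j ∉ F, R j '' Set.Iic (v j) ⊆ c.avoided}
      isCofinal := fun c => (c.exists_ge_image_Iic_subset_avoided hdisj v F).imp fun _ h => h.symm }
  let requirement : (I × ℕ) ⊕ Finset I → Order.Cofinal (RayApprox D R) :=
    Sum.elim (fun q => visiting q.1 q.2) avoiding
  exact ⟨Order.sequenceOfCofinals c₀ requirement,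
    Order.sequenceOfCofinals.monotone c₀ requirement,
    fun i n => ⟨_, Order.sequenceOfCofinals.encode_mem c₀ requirement (.inl (i, n))⟩,
    fun F => ⟨_, Order.sequenceOfCofinals.encode_mem c₀ requirement (.inr F)⟩⟩

end RayApprox

theorem exists_isOutRay_visiting_avoiding {I : Type*} [Countable I] [Infinite I]
    {D : Digraph V} {R : I → ℕ → V} (hray : ∀ i, IsOutRay D (R i))
    (hdisj : Pairwise (Function.onFun Disjoint fun i => Set.range (R i)))
    (hpaths : ∀ i j, ManyDisjointPaths D (Set.range (R i)) (Set.range (R j))) (v : I → ℕ) :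
    ∃ S, IsOutRay D S ∧ (∀ i, {n | S n ∈ Set.range (R i)}.Infinite) ∧
      {j | ∀ n, ∀ m ≤ v j, S n ≠ R j m}.Infinite := by
  obtain ⟨s, hmono, hvisit, havoid⟩ :=
    RayApprox.exists_monotone_visiting_avoiding hray hdisj hpaths v
  have hlen (n : ℕ) : ∃ k, n < (s k).path.length :=
    (hvisit (Classical.arbitrary I) n).imp fun _ h => h.1
  obtain ⟨S, hSray, hS⟩ := exists_isOutRay_of_isPrefix (fun k => (s k).isDipath)
    (fun _ _ h => (hmono h).1) hlen
  have hSavoid (n k : ℕ) : S n ∉ (s k).avoided := by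
    obtain ⟨k', hk'⟩ := hlen n
    intro hmem
    have hlt : n < (s (max k k')).path.length :=
      hk'.trans_le (hmono (le_max_right k k')).1.length_le
    refine (s (max k k')).notMem_avoided _ (List.getElem_mem hlt) ?_
    exact hS _ n hlt ▸ (hmono (le_max_left k k')).2 hmem
  refine ⟨S, hSray, fun i => Set.infinite_of_forall_exists_gt fun n => ?_, fun hfin => ?_⟩
  · obtain ⟨k, hk, w, hw⟩ := hvisit i (n + 1)
    refine ⟨(s k).path.length - 1, ⟨w, ?_⟩, by omega⟩
    rw [hS k _ (by omega)]
    rw [List.getLast?_eq_getElem?, List.getElem?_eq_getElem (by omega)] at hw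
    exact (Option.some.inj hw).symm
  · obtain ⟨k, j, hj, hsub⟩ := havoid hfin.toFinset
    refine hj (hfin.mem_toFinset.2 fun n m hm hnm => hSavoid n k ?_)
    exact hsub ⟨m, hm, hnm.symm⟩

/-- Lemma 4.7: for an infinite family of disjoint equivalent out-rays and chosen vertices
`v i = R i (v i)` on each ray, there are an infinite subfamily `J` and an out-ray `S`
avoiding each initial segment up to `v j` and meeting each `R j` (`j ∈ J`) infinitely
often. -/
theorem stmt7 {I : Type*} [Infinite I] (D : Digraph V) (R : I → ℕ → V) (v : I → ℕ)
    (hray : ∀ i, IsOutRay D (R i))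
    (hdisj : ∀ i j, i ≠ j → ∀ n m, R i n ≠ R j m)
    (hequiv : ∀ i j, i ≠ j → EquivRays D (R i) (R j)) :
    ∃ J : Set I, J.Infinite ∧ ∃ S : ℕ → V, IsOutRay D S ∧
      ∀ j ∈ J, (∀ n : ℕ, ∀ m ≤ v j, S n ≠ R j m) ∧
        {n : ℕ | S n ∈ Set.range (R j)}.Infinite := by
  let e : ℕ ↪ I := Infinite.natEmbedding I
  have hdisj' : Pairwise (Function.onFun Disjoint fun n => Set.range (R (e n))) := by
    intro a b hab
    rw [Function.onFun, Set.disjoint_range_iff]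
    exact hdisj _ _ (e.injective.ne hab)
  have hpaths (a b : ℕ) : ManyDisjointPaths D (Set.range (R (e a))) (Set.range (R (e b))) := by
    rcases eq_or_ne a b with rfl | hab
    · exact manyDisjointPaths_range_self (hray _).1
    · exact (hequiv _ _ (e.injective.ne hab)).1
  obtain ⟨S, hS, hvisit, havoid⟩ :=
    exists_isOutRay_visiting_avoiding (fun n => hray (e n)) hdisj' hpaths (v ∘ e)
  refine ⟨_, havoid.image e.injective.injOn, S, hS, ?_⟩
  rintro _ ⟨a, ha, rfl⟩
  exact ⟨ha, hvisit a⟩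
end

section
/- For every infinite family (R_i)_{i∈I} of pairwise disjoint equivalent out-rays in a digraph D such that the auxiliary graph D^∞(I) contains an out-ray i_1 → i_2 → i_3 → ⋯ (i.e., a sequence of distinct indices with, for each n, infinitely many pairwise disjoint R_{i_n}–R_{i_{n+1}} paths internally disjoint from all rays), there exists an out-ray Ŝ in D, a strictly increasing sequence (α(n)) of indices, and a strictly increasing (along Ŝ) sequence of edges (x_n y_n) with x_n y_n an edge of R_{α(n)}, such that for every n > 1: a terminal segment of the subpath of Ŝ from y_{n−1} to x_n is a staircase visiting R_{α(1)}, R_{α(1)+1}, …, R_{α(n)} in order; the tail of Ŝ after y_n avoids the downward closure of the initial segment of Ŝ up to x_n; and x_n is the first vertex of Ŝ lying on R_{α(n)}. -/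
variable {V : Type*}

/-- The internal vertices of a path. -/
def Internals (p : List V) : List V := p.tail.dropLast

def InternallyAvoids (p : List V) (U : Set V) : Prop := ∀ v ∈ Internals p, v ∉ U

/-- Infinitely many pairwise disjoint `A`–`B` paths whose internal vertices avoid `U`. -/
def ManyDisjointPathsAvoiding (D : Digraph V) (A B U : Set V) : Prop :=
  ∃ P : ℕ → List V,
    (∀ n, IsDipath D (P n) ∧ StartsIn (P n) A ∧ EndsIn (P n) B ∧
      InternallyAvoids (P n) U) ∧
    ∀ m n, m ≠ n → ListsDisjoint (P m) (P n)

/-- The union of the vertex sets of a family of rays. -/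
def RaysUnion {I : Type*} (R : I → ℕ → V) : Set V := ⋃ i, Set.range (R i)

/-- A non-trivial finite segment of a ray `R`, from position `s` to position `t`. -/
def IsRaySegment (R : ℕ → V) (q : List V) : Prop :=
  ∃ s t : ℕ, s < t ∧ q = (List.range (t - s + 1)).map fun m => R (s + m)

/-- `L` is a staircase for the sequence of ray-indices `seq`: a concatenation
`P₀ Q₁ P₁ ⋯ Q_{n-1} P_{n-1}` where `P k` is an `R (seq k)`–`R (seq (k+1))` path
internally disjoint from all rays and each `Q k` (for `k ≥ 1`) is a non-trivial
segment of `R (seq k)`. -/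
def IsStaircase {I : Type*} (D : Digraph V) (R : I → ℕ → V) {n : ℕ}
    (seq : Fin (n + 1) → I) (L : List V) : Prop :=
  ∃ P Q : Fin n → List V,
    (∀ k : Fin n, IsDipath D (P k) ∧
      StartsIn (P k) (Set.range (R (seq k.castSucc))) ∧
      EndsIn (P k) (Set.range (R (seq k.succ))) ∧
      InternallyAvoids (P k) (RaysUnion R)) ∧
    (∀ k : Fin n, 1 ≤ k.val → IsRaySegment (R (seq k.castSucc)) (Q k)) ∧
    (∀ k : Fin n, ∀ h : 1 ≤ k.val,
      (P ⟨k.val - 1, by omega⟩).getLast? = (Q k).head? ∧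
      (Q k).getLast? = (P k).head?) ∧
    L = (List.ofFn fun k : Fin n =>
      if k.val = 0 then P k else (Q k).tail ++ (P k).tail).flatten ∧
    IsDipath D L

/-- Downward closure of a vertex set along a family of rays: `X` together with all ray
vertices having some later vertex of their ray in `X`. -/
def DownCl {I : Type*} (R : I → ℕ → V) (X : Set V) : Set V :=
  X ∪ {v | ∃ i m, v = R i m ∧ ∃ m', m ≤ m' ∧ R i m' ∈ X}

/-!
A finite vertex set has a finite downward closure, so every infinite family of disjoint dipaths
contains one that avoids it. Choosing rungs one after the other outside the downward closure of the
earlier ones therefore makes them move up the rays, and consecutive rungs can be joined along the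
rays into a staircase outside any prescribed finite set.

The out-ray is the union of an increasing sequence of finite dipaths, the `n`-th of which ends with
the `n`-th edge `x y`. As `x` is its first vertex on the ray of that edge, `y` lies outside the
downward closure `C` of the part up to `x`. From `y` one reaches the first ray outside `C`, climbs
that ray until a staircase starts that avoids all that has been built so far and leads to a ray not
met before, and takes one edge of that ray. Climbing a ray never enters `C`, because `C` is closed
downwards.
-/

section Sequences

variable {α : Type*}

theorem exists_seq_of_forall_exists {p : α → Prop} {r : α → α → Prop} {a : α}
    (ha : p a) (h : ∀ x, p x → ∃ y, p y ∧ r x y) :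
    ∃ f : ℕ → α, f 0 = a ∧ (∀ n, p (f n)) ∧ ∀ n, r (f n) (f (n + 1)) := by
  choose next hp hr using fun x : {x // p x} => h x x.2
  let f : ℕ → {x // p x} := Nat.rec ⟨a, ha⟩ fun _ x => ⟨next x, hp x⟩
  exact ⟨fun n => (f n).1, rfl, fun n => (f n).2, fun n => hr (f n)⟩

theorem exists_seq_forall_lt {p : ℕ → α → Prop} {r : α → α → Prop}
    (h : ∀ n (l : List α), ∃ y, p n y ∧ ∀ x ∈ l, r x y) :
    ∃ f : ℕ → α, (∀ n, p n (f n)) ∧ ∀ m n, m < n → r (f m) (f n) := by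
  choose next hp hr using h
  let earlier : ℕ → List α := Nat.rec [] fun n l => next n l :: l
  have hmem {m n : ℕ} (hmn : m < n) : next m (earlier m) ∈ earlier n := by
    induction n, hmn using Nat.le_induction with
    | base => exact List.mem_cons_self
    | succ n _ ih => exact List.mem_cons_of_mem _ ih
  exact ⟨fun n => next n (earlier n), fun n => hp n _, fun m n hmn => hr n _ _ (hmem hmn)⟩

end Sequences

section Lists

variable {D : Digraph V} {a b c : V} {p q w : List V}

theorem isChain_append_tail (hp : p.IsChain D.Adj) (hq : q.IsChain D.Adj)
    (hpq : p.getLast? = q.head?) : (p ++ q.tail).IsChain D.Adj := by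
  refine List.isChain_append.2 ⟨hp, hq.tail, fun x hx y hy => ?_⟩
  rw [hpq] at hx
  obtain ⟨q, rfl⟩ := List.head?_eq_some_iff.1 hx
  exact List.isChain_cons.1 hq |>.1 y hy

/-- `p` is a dipath of `D` with first vertex `a` and last vertex `b`. -/
structure IsDipathBetween (D : Digraph V) (a b : V) (p : List V) : Prop where
  isDipath : IsDipath D p
  head?_eq : p.head? = some a
  getLast?_eq : p.getLast? = some b

namespace IsDipathBetween

theorem singleton : IsDipathBetween D a a [a] :=
  ⟨⟨by simp, by simp, .singleton a⟩, rfl, rfl⟩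

theorem start_mem (hp : IsDipathBetween D a b p) : a ∈ p := List.mem_of_head? hp.head?_eq

theorem end_mem (hp : IsDipathBetween D a b p) : b ∈ p := List.mem_of_getLast? hp.getLast?_eq

theorem cons_tail (hp : IsDipathBetween D a b p) : a :: p.tail = p :=
  List.cons_head?_tail hp.head?_eq

theorem dropLast_concat (hp : IsDipathBetween D a b p) : p.dropLast ++ [b] = p :=
  List.dropLast_append_getLast? b hp.getLast?_eq

theorem cons (h : D.Adj a b) (ha : a ∉ p) (hp : IsDipathBetween D b c p) :
    IsDipathBetween D a c (a :: p) := by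
  refine ⟨⟨by simp, List.nodup_cons.2 ⟨ha, hp.isDipath.2.1⟩, ?_⟩, rfl, ?_⟩
  · exact List.isChain_cons.2 ⟨fun y hy => by simp_all [hp.head?_eq], hp.isDipath.2.2⟩
  · simp [List.getLast?_cons, hp.getLast?_eq]

theorem exists_subset_of_mem (hp : IsDipathBetween D a b p) (hc : c ∈ p) :
    ∃ q, IsDipathBetween D c b q ∧ q ⊆ p := by
  obtain ⟨s, t, rfl⟩ := List.append_of_mem hc
  obtain ⟨⟨-, hnodup, hchain⟩, -, hlast⟩ := hp
  exact ⟨c :: t, ⟨⟨by simp, (List.nodup_append.1 hnodup).2.1, (List.isChain_append.1 hchain).2.1⟩,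
    rfl, by rwa [List.getLast?_append_of_ne_nil _ (by simp)] at hlast⟩,
    List.subset_append_right s _⟩

theorem mem_internals (hp : IsDipathBetween D a b p) (hc : c ∈ p) (hca : c ≠ a) (hcb : c ≠ b) :
    c ∈ Internals p := by
  have hcp : c ∈ p.dropLast := by
    rw [← hp.dropLast_concat] at hc
    simpa [hcb] using hc
  have hhead : p.dropLast.head? = some a := by
    have h := hp.head?_eq
    rw [← hp.dropLast_concat, List.head?_append] at h
    cases hq : p.dropLast <;> simp_all
  rw [Internals, ← List.tail_dropLast]
  rw [← List.cons_head?_tail hhead] at hcp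
  exact (List.mem_cons.1 hcp).resolve_left hca

theorem mem_append_tail_iff (hp : IsDipathBetween D a b p) (hq : IsDipathBetween D b c q) {v : V} :
    v ∈ p ++ q.tail ↔ v ∈ p ∨ v ∈ q := by
  rw [List.mem_append, ← hq.cons_tail, List.mem_cons, List.tail_cons]
  constructor
  · tauto
  · rintro (h | rfl | h)
    exacts [.inl h, .inl hp.end_mem, .inr h]

theorem append_tail (hp : IsDipathBetween D a b p) (hq : IsDipathBetween D b c q)
    (hpq : ∀ v ∈ p, v ∈ q → v = b) : IsDipathBetween D a c (p ++ q.tail) := by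
  have hq' := hq.isDipath.2.1
  rw [← hq.cons_tail, List.nodup_cons] at hq'
  refine ⟨⟨by simp [hp.isDipath.1], ?_, ?_⟩, by simp [hp.head?_eq], ?_⟩
  · refine List.nodup_append'.2 ⟨hp.isDipath.2.1, hq'.2, fun v hvp hvq => ?_⟩
    exact hq'.1 (hpq v hvp (List.mem_of_mem_tail hvq) ▸ hvq)
  · exact isChain_append_tail hp.isDipath.2.2 hq.isDipath.2.2
      (hp.getLast?_eq.trans hq.head?_eq.symm)
  · rw [← hp.dropLast_concat, List.append_assoc, List.singleton_append, hq.cons_tail,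
      List.getLast?_append_of_ne_nil _ hq.isDipath.1, hq.getLast?_eq]

end IsDipathBetween

theorem exists_isDipathBetween_subset {B : Set V} (hw : w.IsChain D.Adj) (ha : w.head? = some a)
    (hB : ∃ v ∈ w, v ∈ B) :
    ∃ b ∈ B, ∃ p, IsDipathBetween D a b p ∧ p ⊆ w ∧ ∀ v ∈ p, v ∈ B → v = b := by
  induction w generalizing a with
  | nil => simp at ha
  | cons x w ih =>
    obtain rfl : x = a := by simpa using ha
    by_cases hx : x ∈ B
    · exact ⟨x, hx, [x], .singleton, by simp, by simp⟩
    have hBw : ∃ v ∈ w, v ∈ B := by simpa [hx] using hB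
    obtain ⟨y, hy⟩ : ∃ y, w.head? = some y := by
      cases w <;> simp_all
    obtain ⟨b, hb, p, hp, hpw, hpB⟩ := ih hw.tail hy hBw
    by_cases hxp : x ∈ p
    · obtain ⟨q, hq, hqp⟩ := hp.exists_subset_of_mem hxp
      exact ⟨b, hb, q, hq, fun v hv => List.mem_cons_of_mem _ (hpw (hqp hv)),
        fun v hv => hpB v (hqp hv)⟩
    · refine ⟨b, hb, x :: p, hp.cons ((List.isChain_cons.1 hw).1 y hy) hxp,
        List.cons_subset_cons x hpw, ?_⟩
      simpa [hx] using hpB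

theorem exists_disjoint_finite {P : ℕ → List V} (hP : ∀ m n, m ≠ n → ListsDisjoint (P m) (P n))
    {X : Set V} (hX : X.Finite) : ∃ n, ∀ v ∈ P n, v ∉ X := by
  by_contra! h
  choose f hfP hfX using h
  refine Set.infinite_of_injective_forall_mem (f := f) (fun m n hmn => ?_) hfX hX
  by_contra hne
  exact hP m n hne _ (hfP m) (hmn ▸ hfP n)

end Lists

section RaySegments

variable {D : Digraph V} {r : ℕ → V} {s t : ℕ}

/-- The vertices `r s, r (s + 1), …, r t` of a ray, for `s ≤ t`. -/
def raySegment (r : ℕ → V) (s t : ℕ) : List V := (List.range (t - s + 1)).map fun m => r (s + m)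

theorem mem_raySegment (h : s ≤ t) {v : V} :
    v ∈ raySegment r s t ↔ ∃ m, s ≤ m ∧ m ≤ t ∧ r m = v := by
  simp only [raySegment, List.mem_map, List.mem_range]
  constructor
  · rintro ⟨m, hm, rfl⟩
    exact ⟨s + m, by omega, by omega, rfl⟩
  · rintro ⟨m, hsm, hmt, rfl⟩
    exact ⟨m - s, by omega, by rw [Nat.add_sub_cancel' hsm]⟩

theorem raySegment_succ (h : s ≤ t) : raySegment r s (t + 1) = raySegment r s t ++ [r (t + 1)] := by
  rw [raySegment, Nat.sub_add_comm h, List.range_succ, List.map_append, List.map_singleton,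
    ← Nat.sub_add_comm h, Nat.add_sub_cancel' (by omega), raySegment, Nat.sub_add_comm h]

theorem IsOutRay.isDipathBetween_edge (hr : IsOutRay D r) (m : ℕ) :
    IsDipathBetween D (r m) (r (m + 1)) [r m, r (m + 1)] :=
  IsDipathBetween.singleton.cons (hr.2 m) (by simpa using hr.1.ne m.lt_succ_self.ne)

theorem IsOutRay.isDipathBetween_raySegment (hr : IsOutRay D r) (h : s ≤ t) :
    IsDipathBetween D (r s) (r t) (raySegment r s t) := by
  induction t, h using Nat.le_induction with
  | base => simpa [raySegment] using IsDipathBetween.singleton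
  | succ t h ih =>
    rw [raySegment_succ h]
    refine ih.append_tail (hr.isDipathBetween_edge t) fun v hv hv' => ?_
    obtain ⟨m, -, hm, rfl⟩ := (mem_raySegment h).1 hv
    simpa [hr.1.eq_iff, show m ≠ t + 1 by omega] using hv'

theorem drop_raySegment_zero (h : s ≤ t) : (raySegment r 0 t).drop s = raySegment r s t :=
  List.ext_getElem (by simp [raySegment]; omega) fun _ _ _ => by simp [raySegment]

end RaySegments

section DownwardClosure

variable {I : Type*} {R : I → ℕ → V} {X Y : Set V}

theorem injective2_of_isOutRay_of_disjoint {D : Digraph V} (hray : ∀ i, IsOutRay D (R i))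
    (hdisj : ∀ i j, i ≠ j → ∀ n m, R i n ≠ R j m) : Function.Injective2 R := by
  intro i j m n h
  obtain rfl : i = j := by_contra fun hij => hdisj i j hij m n h
  exact ⟨rfl, (hray i).1 h⟩

theorem subset_downCl : X ⊆ DownCl R X := Set.subset_union_left

theorem downCl_mono (h : X ⊆ Y) : DownCl R X ⊆ DownCl R Y :=
  Set.union_subset_union h fun _ ⟨i, m, hv, m', hm, hX⟩ => ⟨i, m, hv, m', hm, h hX⟩

theorem ray_mem_downCl_iff (hR : Function.Injective2 R) {i : I} {m : ℕ} :
    R i m ∈ DownCl R X ↔ ∃ m', m ≤ m' ∧ R i m' ∈ X := by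
  constructor
  · rintro (h | ⟨j, k, hjk, m', hm, hX⟩)
    · exact ⟨m, le_rfl, h⟩
    · obtain ⟨rfl, rfl⟩ := hR hjk
      exact ⟨m', hm, hX⟩
  · rintro ⟨m', hm, hX⟩
    exact .inr ⟨i, m, rfl, m', hm, hX⟩

theorem ray_mem_downCl_of_le (hR : Function.Injective2 R) {i : I} {m m' : ℕ} (hm : m ≤ m')
    (h : R i m' ∈ DownCl R X) : R i m ∈ DownCl R X := by
  obtain ⟨k, hk, hX⟩ := (ray_mem_downCl_iff hR).1 h
  exact (ray_mem_downCl_iff hR).2 ⟨k, hm.trans hk, hX⟩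

theorem ray_mem_of_mem_downCl (hR : Function.Injective2 R) {i : I} {m z : ℕ}
    (hz : ∀ q, R i q ∈ X → q ≤ z) (hzm : z ≤ m) (h : R i m ∈ DownCl R X) : R i m ∈ X := by
  obtain ⟨q, hmq, hq⟩ := (ray_mem_downCl_iff hR).1 h
  rwa [hmq.antisymm ((hz q hq).trans hzm)]

theorem finite_setOf_ray_mem (hR : Function.Injective2 R) (hX : X.Finite) :
    {x : I × ℕ | R x.1 x.2 ∈ X}.Finite :=
  hX.preimage hR.uncurry.injOn

theorem finite_downCl (hR : Function.Injective2 R) (hX : X.Finite) : (DownCl R X).Finite := by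
  refine hX.union (((finite_setOf_ray_mem hR hX).biUnion
    fun x _ => (Set.finite_Iic x.2).image (R x.1)).subset ?_)
  rintro v ⟨i, m, rfl, m', hm, hX⟩
  exact Set.mem_biUnion (x := (i, m')) hX ⟨m, hm, rfl⟩

theorem finite_setOf_ray_meets (hR : Function.Injective2 R) (hX : X.Finite) :
    {i | ∃ m, R i m ∈ X}.Finite :=
  ((finite_setOf_ray_mem hR hX).image Prod.fst).subset fun i ⟨m, hm⟩ => ⟨(i, m), hm, rfl⟩

end DownwardClosure

section Rungs

variable {I : Type*} {D : Digraph V} {R : I → ℕ → V} {X : Set V}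

/-- A rung is a dipath of `D` from `R i s` to `R j t` that is internally disjoint from all the rays:
one of the paths from which staircases are built. -/
structure IsRung (D : Digraph V) (R : I → ℕ → V) (i j : I) (s t : ℕ) (p : List V) : Prop where
  isDipathBetween : IsDipathBetween D (R i s) (R j t) p
  internallyAvoids : InternallyAvoids p (RaysUnion R)

theorem IsRung.ray_mem (hR : Function.Injective2 R) {i j : I} {s t : ℕ} {p : List V}
    (h : IsRung D R i j s t p) {k : I} {m : ℕ} (hm : R k m ∈ p) :
    k = i ∧ m = s ∨ k = j ∧ m = t := by
  by_contra! hne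
  refine h.internallyAvoids _ (h.isDipathBetween.mem_internals hm ?_ ?_)
    (Set.mem_iUnion.2 ⟨k, m, rfl⟩)
  · exact fun hs => hne.1 (hR hs).1 (hR hs).2
  · exact fun ht => hne.2 (hR ht).1 (hR ht).2

theorem ManyDisjointPathsAvoiding.exists_isRung {i j : I}
    (h : ManyDisjointPathsAvoiding D (Set.range (R i)) (Set.range (R j)) (RaysUnion R))
    (hX : X.Finite) : ∃ p, (∃ s t, IsRung D R i j s t p) ∧ ∀ v ∈ p, v ∉ X := by
  obtain ⟨P, hP, hdisj⟩ := h
  obtain ⟨n, hn⟩ := exists_disjoint_finite hdisj hX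
  obtain ⟨hdipath, ⟨_, ⟨s, rfl⟩, hs⟩, ⟨_, ⟨t, rfl⟩, ht⟩, havoid⟩ := hP n
  exact ⟨P n, ⟨s, t, ⟨hdipath, hs, ht⟩, havoid⟩, hn⟩

/-- An infinite sequence of rungs leading from each ray `R (ι k)` to the next one, each of which
avoids the downward closure of all earlier ones. As the rungs move up the rays, the ends of
consecutive rungs can be joined along the rays into staircases. -/
structure RungSeq (D : Digraph V) (R : I → ℕ → V) (ι : ℕ → I) where
  path : ℕ → List V
  start : ℕ → ℕ
  finish : ℕ → ℕ
  isRung : ∀ k, IsRung D R (ι k) (ι (k + 1)) (start k) (finish k) (path k)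
  notMem_downCl : ∀ k l, k < l → ∀ v ∈ path l, v ∉ DownCl R {w | w ∈ path k}

theorem exists_rungSeq (hR : Function.Injective2 R) {ι : ℕ → I}
    (hedge : ∀ k, ManyDisjointPathsAvoiding D (Set.range (R (ι k))) (Set.range (R (ι (k + 1))))
      (RaysUnion R)) (hX : X.Finite) :
    ∃ c : RungSeq D R ι, ∀ k, ∀ v ∈ c.path k, v ∉ X := by
  obtain ⟨P, hP, hlt⟩ := exists_seq_forall_lt
    (p := fun k p => (∃ s t, IsRung D R (ι k) (ι (k + 1)) s t p) ∧ ∀ v ∈ p, v ∉ X)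
    (r := fun p q => ∀ v ∈ q, v ∉ DownCl R {w | w ∈ p}) fun k l => by
      have hfin : (X ∪ ⋃ p ∈ {p | p ∈ l}, DownCl R {w | w ∈ p}).Finite :=
        hX.union (l.finite_toSet.biUnion fun p _ => finite_downCl hR p.finite_toSet)
      obtain ⟨p, hp, havoid⟩ := (hedge k).exists_isRung hfin
      exact ⟨p, ⟨hp, fun v hv h => havoid v hv (.inl h)⟩,
        fun q hq v hv h => havoid v hv (.inr (Set.mem_biUnion hq h))⟩
  choose s t hrung using fun k => (hP k).1
  exact ⟨⟨P, s, t, hrung, hlt⟩, fun k => (hP k).2⟩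

end Rungs

namespace RungSeq

variable {I : Type*} {D : Digraph V} {R : I → ℕ → V} {ι : ℕ → I} (c : RungSeq D R ι)

/-- The segment of the ray `R (ι (k + 1))` that joins the `k`-th rung to the next one. -/
def landing (k : ℕ) : List V := raySegment (R (ι (k + 1))) (c.finish k) (c.start (k + 1))

/-- The staircase made of the rungs `0, …, n` and the landings between them. -/
def stairs : ℕ → List V
  | 0 => c.path 0
  | n + 1 => stairs n ++ (c.landing n).tail ++ (c.path (n + 1)).tail

theorem finish_lt_start_succ (k : ℕ) : c.finish k < c.start (k + 1) := by
  by_contra! h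
  refine c.notMem_downCl k (k + 1) k.lt_succ_self _ (c.isRung (k + 1)).isDipathBetween.start_mem
    (.inr ⟨_, _, rfl, _, h, (c.isRung k).isDipathBetween.end_mem⟩)

theorem mem_landing {k : ℕ} {v : V} : v ∈ c.landing k ↔
    ∃ m, c.finish k ≤ m ∧ m ≤ c.start (k + 1) ∧ R (ι (k + 1)) m = v :=
  mem_raySegment (c.finish_lt_start_succ k).le

theorem mem_path_or_mem_landing {n : ℕ} {v : V} (hv : v ∈ c.stairs n) :
    (∃ k ≤ n, v ∈ c.path k) ∨ ∃ k < n, v ∈ c.landing k := by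
  induction n with
  | zero => exact .inl ⟨0, le_rfl, hv⟩
  | succ n ih =>
    simp only [stairs, List.mem_append] at hv
    rcases hv with (hv | hv) | hv
    · rcases ih hv with ⟨k, hk, hv⟩ | ⟨k, hk, hv⟩
      exacts [.inl ⟨k, by omega, hv⟩, .inr ⟨k, by omega, hv⟩]
    · exact .inr ⟨n, n.lt_succ_self, List.mem_of_mem_tail hv⟩
    · exact .inl ⟨n + 1, le_rfl, List.mem_of_mem_tail hv⟩

theorem ray_mem_stairs (hR : Function.Injective2 R) (hι : Function.Injective ι) {l m n : ℕ}
    (h : R (ι l) m ∈ c.stairs n) :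
    l ≤ n ∧ m = c.start l ∨ (∃ k ≤ n, l = k + 1 ∧ m = c.finish k) ∨ ∃ k < n, l = k + 1 := by
  rcases c.mem_path_or_mem_landing h with ⟨k, hk, h⟩ | ⟨k, hk, h⟩
  · rcases (c.isRung k).ray_mem hR h with ⟨hl, hm⟩ | ⟨hl, hm⟩
    · obtain rfl := hι hl
      exact .inl ⟨hk, hm⟩
    · exact .inr (.inl ⟨k, hk, hι hl, hm⟩)
  · obtain ⟨m', -, -, hm'⟩ := c.mem_landing.1 h
    exact .inr (.inr ⟨k, hk, hι (hR hm').1.symm⟩)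

theorem eq_start_of_mem_stairs (hR : Function.Injective2 R) (hι : Function.Injective ι) {m n : ℕ}
    (h : R (ι 0) m ∈ c.stairs n) : m = c.start 0 := by
  rcases c.ray_mem_stairs hR hι h with ⟨-, h⟩ | ⟨k, -, h, -⟩ | ⟨k, -, h⟩
  exacts [h, absurd h (by omega), absurd h (by omega)]

theorem eq_finish_of_mem_stairs (hR : Function.Injective2 R) (hι : Function.Injective ι) {m n : ℕ}
    (h : R (ι (n + 1)) m ∈ c.stairs n) : m = c.finish n := by
  rcases c.ray_mem_stairs hR hι h with ⟨h, -⟩ | ⟨k, -, h, hm⟩ | ⟨k, hk, h⟩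
  · omega
  · obtain rfl : n = k := by omega
    exact hm
  · omega

theorem notMem_path_succ_of_mem_stairs {n : ℕ} {v : V} (hv : v ∈ c.stairs n) :
    v ∉ c.path (n + 1) := by
  intro hv'
  rcases c.mem_path_or_mem_landing hv with ⟨k, hk, h⟩ | ⟨k, hk, h⟩
  · exact c.notMem_downCl k (n + 1) (by omega) v hv' (subset_downCl h)
  · obtain ⟨m, -, hm, rfl⟩ := c.mem_landing.1 h
    exact c.notMem_downCl (k + 1) (n + 1) (by omega) _ hv'
      (.inr ⟨_, m, rfl, _, hm, (c.isRung (k + 1)).isDipathBetween.start_mem⟩)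

theorem notMem_downCl_of_mem_stairs (hR : Function.Injective2 R) {X : Set V}
    (hX : ∀ k, ∀ v ∈ c.path k, v ∉ DownCl R X) {n : ℕ} {v : V} (hv : v ∈ c.stairs n) :
    v ∉ DownCl R X := by
  rcases c.mem_path_or_mem_landing hv with ⟨k, -, h⟩ | ⟨k, -, h⟩
  · exact hX k v h
  · obtain ⟨m, hm, -, rfl⟩ := c.mem_landing.1 h
    exact fun h => hX k _ (c.isRung k).isDipathBetween.end_mem (ray_mem_downCl_of_le hR hm h)

theorem isDipathBetween_stairs (hray : ∀ i, IsOutRay D (R i)) (hR : Function.Injective2 R)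
    (hι : Function.Injective ι) (n : ℕ) :
    IsDipathBetween D (R (ι 0) (c.start 0)) (R (ι (n + 1)) (c.finish n)) (c.stairs n) := by
  induction n with
  | zero => exact (c.isRung 0).isDipathBetween
  | succ n ih =>
    have hland : IsDipathBetween D _ _ (c.landing n) :=
      (hray _).isDipathBetween_raySegment (c.finish_lt_start_succ n).le
    have hstairs := ih.append_tail hland fun v hv hv' => by
      obtain ⟨m, -, -, rfl⟩ := c.mem_landing.1 hv'
      rw [c.eq_finish_of_mem_stairs hR hι hv]
    refine hstairs.append_tail (c.isRung (n + 1)).isDipathBetween fun v hv hv' => ?_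
    rcases (ih.mem_append_tail_iff hland).1 hv with hv | hv
    · exact absurd hv' (c.notMem_path_succ_of_mem_stairs hv)
    · obtain ⟨m, -, -, rfl⟩ := c.mem_landing.1 hv
      rcases (c.isRung (n + 1)).ray_mem hR hv' with ⟨-, rfl⟩ | ⟨h, -⟩
      · rfl
      · exact absurd (hι h) (by omega)

theorem stairs_eq_flatten (n : ℕ) :
    c.stairs n = (List.ofFn fun k : Fin (n + 1) =>
      if k.val = 0 then c.path k else (c.landing (k - 1)).tail ++ (c.path k).tail).flatten := by
  induction n with
  | zero => simp [stairs]
  | succ n ih =>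
    rw [stairs, ih, List.ofFn_succ_last (n := n + 1), List.flatten_append]
    simp

theorem isStaircase_stairs (hray : ∀ i, IsOutRay D (R i)) (hR : Function.Injective2 R)
    (hι : Function.Injective ι) (n : ℕ) :
    IsStaircase D R (n := n + 1) (fun k => ι k) (c.stairs n) := by
  refine ⟨fun k => c.path k, fun k => c.landing (k - 1), fun k => ?_, fun k hk => ?_,
    fun k hk => ?_, c.stairs_eq_flatten n, (c.isDipathBetween_stairs hray hR hι n).isDipath⟩
  · obtain ⟨⟨hdipath, hhead, hlast⟩, havoid⟩ := c.isRung k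
    exact ⟨hdipath, ⟨_, ⟨_, rfl⟩, hhead⟩, ⟨_, ⟨_, rfl⟩, hlast⟩, havoid⟩
  · obtain ⟨k', hk'⟩ := Nat.exists_eq_add_of_le' hk
    exact ⟨c.finish k', c.start (k' + 1), c.finish_lt_start_succ k',
      by simp [hk', landing, raySegment]⟩
  · obtain ⟨k', hk'⟩ := Nat.exists_eq_add_of_le' hk
    have hland : IsDipathBetween D _ _ (c.landing k') :=
      (hray _).isDipathBetween_raySegment (c.finish_lt_start_succ k').le
    simp only [hk', Nat.add_sub_cancel]
    exact ⟨(c.isRung k').isDipathBetween.getLast?_eq.trans hland.head?_eq.symm,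
      hland.getLast?_eq.trans (c.isRung (k' + 1)).isDipathBetween.head?_eq.symm⟩

end RungSeq

section Extension

variable {I : Type*} {D : Digraph V} {R : I → ℕ → V} {ι : ℕ → I} {x : V} {L W : List V}

theorem exists_isStaircase (hray : ∀ i, IsOutRay D (R i)) (hR : Function.Injective2 R)
    (hι : Function.Injective ι)
    (hedge : ∀ k, ManyDisjointPathsAvoiding D (Set.range (R (ι k))) (Set.range (R (ι (k + 1))))
      (RaysUnion R)) {X : Set V} (hX : X.Finite) (n : ℕ) :
    ∃ t u A, IsDipathBetween D (R (ι 0) t) (R (ι (n + 1)) u) A ∧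
      IsStaircase D R (n := n + 1) (fun k => ι k) A ∧ (∀ v ∈ A, v ∉ DownCl R X) ∧
      (∀ m, R (ι 0) m ∈ A → m = t) ∧ ∀ m, R (ι (n + 1)) m ∈ A → m = u := by
  obtain ⟨c, hc⟩ := exists_rungSeq hR hedge (finite_downCl hR hX)
  exact ⟨c.start 0, c.finish n, c.stairs n, c.isDipathBetween_stairs hray hR hι n,
    c.isStaircase_stairs hray hR hι n, fun v => c.notMem_downCl_of_mem_stairs hR hc,
    fun m => c.eq_start_of_mem_stairs hR hι, fun m => c.eq_finish_of_mem_stairs hR hι⟩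

theorem ManyDisjointPaths.exists_isDipathBetween {i j : I}
    (h : i ≠ j → ManyDisjointPaths D (Set.range (R i)) (Set.range (R j)))
    (hray : IsOutRay D (R i)) (hR : Function.Injective2 R) {X : Set V} (hX : X.Finite) {m : ℕ}
    (hm : R i m ∉ DownCl R X) :
    ∃ z T, IsDipathBetween D (R i m) (R j z) T ∧ (∀ v ∈ T, v ∉ DownCl R X) ∧
      ∀ q, R j q ∈ T → q = z := by
  obtain ⟨w, hw, hhead, hmeet, havoid⟩ : ∃ w : List V, w.IsChain D.Adj ∧ w.head? = some (R i m) ∧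
      (∃ v ∈ w, v ∈ Set.range (R j)) ∧ ∀ v ∈ w, v ∉ DownCl R X := by
    by_cases hij : i = j
    · exact ⟨[R i m], .singleton _, rfl, ⟨_, List.mem_singleton_self _, hij ▸ ⟨m, rfl⟩⟩, by simpa⟩
    obtain ⟨P, hP, hdisj⟩ := h hij
    obtain ⟨n, hn⟩ := exists_disjoint_finite hdisj
      ((finite_downCl hR hX).union ((Set.finite_Iio m).image (R i)))
    obtain ⟨hdipath, ⟨_, ⟨t, rfl⟩, ht⟩, b, hb, hlast⟩ := hP n
    have hmt : m ≤ t := by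
      by_contra! hlt
      exact hn _ (List.mem_of_head? ht) (.inr ⟨t, hlt, rfl⟩)
    have hseg := hray.isDipathBetween_raySegment hmt
    have hpath : IsDipathBetween D (R i t) b (P n) := ⟨hdipath, ht, hlast⟩
    refine ⟨raySegment (R i) m t ++ (P n).tail, isChain_append_tail hseg.isDipath.2.2 hdipath.2.2
      (hseg.getLast?_eq.trans ht.symm), by simp [hseg.head?_eq],
      ⟨b, (hseg.mem_append_tail_iff hpath).2 (.inr hpath.end_mem), hb⟩, fun v hv => ?_⟩
    rcases (hseg.mem_append_tail_iff hpath).1 hv with hv | hv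
    · obtain ⟨q, hq, -, rfl⟩ := (mem_raySegment hmt).1 hv
      exact fun hX => hm (ray_mem_downCl_of_le hR hq hX)
    · exact fun hX => hn v hv (.inl hX)
  obtain ⟨_, ⟨z, rfl⟩, T, hT, hTw, hTj⟩ := exists_isDipathBetween_subset hw hhead hmeet
  exact ⟨z, T, hT, fun v hv => havoid v (hTw hv), fun q hq => (hR (hTj _ hq ⟨q, rfl⟩)).2⟩

theorem IsDipathBetween.exists_extension_to_ray {i j : I} {m : ℕ}
    (hL : IsDipathBetween D x (R i m) L) (hray : IsOutRay D (R i)) (hR : Function.Injective2 R)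
    (hreach : i ≠ j → ManyDisjointPaths D (Set.range (R i)) (Set.range (R j)))
    (hm : R i m ∉ DownCl R {v | v ∈ L.dropLast}) :
    ∃ z W, IsDipathBetween D x (R j z) W ∧ L <+: W ∧ (∀ q, R j q ∈ W → q ≤ z) ∧
      ∀ v ∈ W, v ∉ L.dropLast → v ∉ DownCl R {v | v ∈ L.dropLast} := by
  obtain ⟨z, T, hT, hTavoid, hTj⟩ :=
    ManyDisjointPaths.exists_isDipathBetween hreach hray hR L.dropLast.finite_toSet hm
  have hmem {v : V} (hv : v ∈ L ++ T.tail) : v ∈ L.dropLast ∨ v ∈ T := by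
    rcases (hL.mem_append_tail_iff hT).1 hv with hv | hv
    · rw [← hL.dropLast_concat, List.mem_append, List.mem_singleton] at hv
      exact hv.imp_right fun h => by rw [h]; exact hT.start_mem
    · exact .inr hv
  refine ⟨z, L ++ T.tail, hL.append_tail hT fun v hv hvT => ?_, List.prefix_append _ _,
    fun q hq => ?_, fun v hv hvL => hTavoid v ((hmem hv).resolve_left hvL)⟩
  · rw [← hL.dropLast_concat, List.mem_append, List.mem_singleton] at hv
    exact hv.resolve_left fun hv => hTavoid v hvT (subset_downCl hv)
  · rcases hmem hq with hq | hq
    · by_contra! hlt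
      exact hTavoid _ hT.end_mem (ray_mem_downCl_of_le hR hlt.le (subset_downCl hq))
    · exact (hTj q hq).le

/-- The list `L` ends with an edge of the ray `r` whose tail is the first vertex of `L` on `r`. -/
def EndsWithFirstEdge (r : ℕ → V) (L : List V) : Prop :=
  ∃ l m, L = l ++ [r m, r (m + 1)] ∧ ∀ v ∈ l, v ∉ Set.range r

theorem EndsWithFirstEdge.exists_end_notMem_downCl (hR : Function.Injective2 R) {i : I}
    (h : EndsWithFirstEdge (R i) L) :
    ∃ m, L.getLast? = some (R i m) ∧ R i m ∉ DownCl R {v | v ∈ L.dropLast} := by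
  obtain ⟨l, m, rfl, hl⟩ := h
  refine ⟨m + 1, by simp, fun hmem => ?_⟩
  obtain ⟨m', hm', h⟩ := (ray_mem_downCl_iff hR).1 hmem
  have h : R i m' ∈ l ∨ R i m' = R i m := by simpa using h
  rcases h with h | h
  · exact hl _ h ⟨m', rfl⟩
  · have := (hR h).2
    omega

theorem IsDipathBetween.isDipath_concat {r : ℕ → V} {u : ℕ} (hL : IsDipathBetween D x (r u) L)
    (hr : IsOutRay D r) (hu : r (u + 1) ∉ L) : IsDipath D (L ++ [r (u + 1)]) := by
  refine (hL.append_tail (hr.isDipathBetween_edge u) fun v hv hv' => ?_).isDipath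
  rcases List.mem_pair.1 hv' with h | rfl
  exacts [h, absurd hv hu]

theorem IsDipathBetween.endsWithFirstEdge_concat {r : ℕ → V} {u : ℕ}
    (hL : IsDipathBetween D x (r u) L) (hu : ∀ m, r m ∈ L → m = u) :
    EndsWithFirstEdge r (L ++ [r (u + 1)]) := by
  have hnodup := hL.isDipath.2.1
  rw [← hL.dropLast_concat, List.nodup_append'] at hnodup
  refine ⟨L.dropLast, u, by rw [List.append_cons L.dropLast, hL.dropLast_concat], ?_⟩
  rintro v hv ⟨m, rfl⟩
  obtain rfl := hu m (List.mem_of_mem_dropLast hv)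
  exact hnodup.2.2 hv (List.mem_singleton_self _)

theorem exists_gt_ray_disjoint (hR : Function.Injective2 R) (hι : Function.Injective ι) {X : Set V}
    (hX : X.Finite) (N : ℕ) : ∃ n, N < n ∧ ∀ m, R (ι n) m ∉ X := by
  have hfin := (finite_setOf_ray_meets hR hX).preimage hι.injOn
  obtain ⟨n, hn, hN⟩ := hfin.infinite_compl.exists_gt N
  exact ⟨n, hN, fun m hm => hn ⟨m, hm⟩⟩

theorem IsDipathBetween.append_raySegment_tail {r : ℕ → V} {z t : ℕ}
    (hW : IsDipathBetween D x (r z) W) (hr : IsOutRay D r) (hz : ∀ q, r q ∈ W → q ≤ z)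
    (hzt : z ≤ t) : IsDipathBetween D x (r t) (W ++ (raySegment r z t).tail) := by
  refine hW.append_tail (hr.isDipathBetween_raySegment hzt) fun v hv hv' => ?_
  obtain ⟨q, hzq, -, rfl⟩ := (mem_raySegment hzt).1 hv'
  rw [(hz q hv).antisymm hzq]

theorem IsDipathBetween.exists_staircase_extension (hray : ∀ i, IsOutRay D (R i))
    (hR : Function.Injective2 R) (hι : Function.Injective ι)
    (hedge : ∀ k, ManyDisjointPathsAvoiding D (Set.range (R (ι k))) (Set.range (R (ι (k + 1))))
      (RaysUnion R)) {z : ℕ} (hW : IsDipathBetween D x (R (ι 0) z) W)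
    (hz : ∀ q, R (ι 0) q ∈ W → q ≤ z) {n : ℕ} (hn : ∀ m, R (ι (n + 1)) m ∉ W) :
    ∃ B A u, IsDipathBetween D x (R (ι (n + 1)) u) (B ++ A) ∧ W <+: B ++ A ∧
      W.length ≤ B.length + 1 ∧ IsStaircase D R (n := n + 1) (fun k => ι k) A ∧
      (∀ m, R (ι (n + 1)) m ∈ B ++ A → m = u) ∧
      ∀ v ∈ B ++ A, v ∉ W → v ∉ DownCl R {v | v ∈ W} := by
  obtain ⟨t, u, A, hA, hstair, hAW, hA₀, hAn⟩ :=
    exists_isStaircase hray hR hι hedge W.finite_toSet n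
  have hzt : z ≤ t := by
    by_contra! hlt
    exact hAW _ hA.start_mem (ray_mem_downCl_of_le hR hlt.le (subset_downCl hW.end_mem))
  have hseg := (hray (ι 0)).isDipathBetween_raySegment hzt
  have hWseg := hW.append_raySegment_tail (hray (ι 0)) hz hzt
  have hWA := hWseg.append_tail hA fun v hv hvA => by
    rcases (hW.mem_append_tail_iff hseg).1 hv with hv | hv
    · exact (hAW v hvA (subset_downCl hv)).elim
    · obtain ⟨q, -, -, rfl⟩ := (mem_raySegment hzt).1 hv
      rw [hA₀ q hvA]
  have hmem {v : V} (hv : v ∈ W ++ (raySegment (R (ι 0)) z t).tail ++ A.tail) :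
      v ∈ W ∨ (∃ q, z ≤ q ∧ R (ι 0) q = v) ∨ v ∈ A := by
    rw [hWseg.mem_append_tail_iff hA, hW.mem_append_tail_iff hseg, mem_raySegment hzt] at hv
    exact or_assoc.1 (hv.imp_left (.imp_right fun ⟨q, hq, _, h⟩ => ⟨q, hq, h⟩))
  obtain ⟨B, hB⟩ : ∃ B, W ++ (raySegment (R (ι 0)) z t).tail = B ++ [R (ι 0) t] :=
    ⟨_, hWseg.dropLast_concat.symm⟩
  have hBA : W ++ (raySegment (R (ι 0)) z t).tail ++ A.tail = B ++ A := by
    rw [hB, List.append_assoc, List.singleton_append, hA.cons_tail]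
  rw [hBA] at hWA hmem
  refine ⟨B, A, u, hWA, hBA ▸ ⟨_, (List.append_assoc ..).symm⟩, ?_, hstair, fun m hm => ?_,
    fun v hv hvW => ?_⟩
  · simpa using (List.prefix_append W _).length_le.trans_eq (congrArg List.length hB)
  · rcases hmem hm with hm | ⟨q, -, hq⟩ | hm
    exacts [absurd hm (hn m), absurd (hι (hR hq).1) (by omega), hAn m hm]
  · rcases hmem hv with hv | ⟨q, hzq, rfl⟩ | hv
    exacts [absurd hv hvW, mt (ray_mem_of_mem_downCl hR hz hzq) hvW, hAW v hv]

/-- The list `L'` extends `L`, outside the downward closure of `L` without its last vertex, and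
ends with a staircase along `R (ι 0), …, R (ι n)` and one further vertex. The staircase may start
in the last vertex of `L`. -/
structure StairExtends (D : Digraph V) (R : I → ℕ → V) (ι : ℕ → I) (n : ℕ) (L L' : List V) :
    Prop where
  isPrefix : L <+: L'
  exists_isStaircase : ∃ B A y, L' = B ++ A ++ [y] ∧ L.length ≤ B.length + 1 ∧
    IsStaircase D R (n := n) (fun k => ι k) A
  notMem_downCl : ∀ v ∈ L', v ∉ L.dropLast → v ∉ DownCl R {v | v ∈ L.dropLast}

theorem EndsWithFirstEdge.exists_stairExtends (hray : ∀ i, IsOutRay D (R i))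
    (hR : Function.Injective2 R) (hι : Function.Injective ι)
    (hreach : ∀ k ≠ 0, ManyDisjointPaths D (Set.range (R (ι k))) (Set.range (R (ι 0))))
    (hedge : ∀ k, ManyDisjointPathsAvoiding D (Set.range (R (ι k))) (Set.range (R (ι (k + 1))))
      (RaysUnion R)) (hL : IsDipath D L) {k : ℕ} (hk : EndsWithFirstEdge (R (ι k)) L) :
    ∃ n L', k < n ∧ IsDipath D L' ∧ EndsWithFirstEdge (R (ι n)) L' ∧
      StairExtends D R ι n L L' := by
  obtain ⟨m, hlast, hm⟩ := hk.exists_end_notMem_downCl hR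
  obtain ⟨x, hhead⟩ : ∃ x, L.head? = some x := ⟨_, List.head?_eq_some_head hL.1⟩
  obtain ⟨z, W, hW, hLW, hWz, hWL⟩ :=
    IsDipathBetween.exists_extension_to_ray ⟨hL, hhead, hlast⟩ (hray _) hR
      (fun hk0 => hreach k fun h => hk0 (h ▸ rfl)) hm
  obtain ⟨_ | n, hkn, hn⟩ := exists_gt_ray_disjoint hR hι W.finite_toSet k
  · omega
  obtain ⟨B, A, u, hBA, hWBA, hlen, hstair, hu, hBAW⟩ :=
    hW.exists_staircase_extension hray hR hι hedge hWz hn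
  refine ⟨n + 1, _, hkn, hBA.isDipath_concat (hray _) fun h => absurd (hu _ h) (by omega),
    hBA.endsWithFirstEdge_concat hu, hLW.trans (hWBA.trans (List.prefix_append _ _)),
    ⟨B, A, _, rfl, hLW.length_le.trans hlen, hstair⟩, fun v hv hvL => ?_⟩
  have hsub : {v | v ∈ L.dropLast} ⊆ {v | v ∈ W} := fun v hv =>
    hLW.subset (List.mem_of_mem_dropLast hv)
  by_cases hvW : v ∈ W
  · exact hWL v hvW hvL
  refine fun hmem => ?_
  rcases List.mem_append.1 hv with hv | hv
  · exact hBAW v hv hvW (downCl_mono hsub hmem)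
  · rw [List.mem_singleton.1 hv, ray_mem_downCl_iff hR] at hmem
    obtain ⟨m', -, hm'⟩ := hmem
    exact hn m' (hsub hm')

end Extension

section Limit

variable {I : Type*} {D : Digraph V} {R : I → ℕ → V} {ι : ℕ → I} {S : ℕ → V}

theorem exists_isOutRay_of_isPrefix_succ {L : ℕ → List V} (hL : ∀ n, IsDipath D (L n))
    (hpre : ∀ n, L n <+: L (n + 1)) (hlen : ∀ n, (L n).length < (L (n + 1)).length) :
    ∃ S, IsOutRay D S ∧ ∀ n, L n = raySegment S 0 ((L n).length - 1) := by
  have hmono {m n : ℕ} (h : m ≤ n) : L m <+: L n := by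
    induction n, h using Nat.le_induction with
    | base => exact List.prefix_refl _
    | succ n _ ih => exact ih.trans (hpre n)
  have hpos (n : ℕ) : 0 < (L n).length := List.length_pos_iff.2 (hL n).1
  have hlt (n : ℕ) : n < (L n).length := by
    induction n with
    | zero => exact hpos 0
    | succ n ih => exact (Nat.succ_le_of_lt ih).trans_lt (hlen n)
  let S (k : ℕ) : V := (L k)[k]'(hlt k)
  have hS {n k : ℕ} (hk : k < (L n).length) : (L n)[k] = S k := by
    rcases le_total k n with h | h
    · exact ((hmono h).getElem (hlt k)).symm
    · exact (hmono h).getElem hk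
  refine ⟨S, ⟨fun j k hjk => ?_, fun k => ?_⟩, fun n => ?_⟩
  · have hj := (le_max_left j k).trans_lt (hlt _)
    have hk := (le_max_right j k).trans_lt (hlt _)
    rw [← hS hj, ← hS hk] at hjk
    exact (hL _).2.1.getElem_inj_iff.1 hjk
  · have h := List.isChain_iff_getElem.1 (hL (k + 1)).2.2 k (hlt (k + 1))
    rwa [hS, hS] at h
  · have := hpos n
    refine List.ext_getElem (by simp [raySegment]; omega) fun k hk _ => ?_
    simp [raySegment, hS hk]

theorem EndsWithFirstEdge.of_raySegment {r : ℕ → V} {p : ℕ}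
    (h : EndsWithFirstEdge r (raySegment S 0 (p + 1))) :
    (∃ m, r m = S p ∧ r (m + 1) = S (p + 1)) ∧ ∀ t < p, S t ∉ Set.range r := by
  obtain ⟨l, m, hseg, hl⟩ := h
  rw [raySegment_succ p.zero_le, List.append_cons l] at hseg
  obtain ⟨hseg, hlast⟩ := List.append_inj' hseg rfl
  have hp : l.length = p := by simpa [raySegment] using (congrArg List.length hseg).symm
  have hget (t : ℕ) (ht : t ≤ p) : (l ++ [r m])[t]? = some (S t) := by
    simp [← hseg, raySegment, Nat.lt_succ_iff.2 ht]
  refine ⟨⟨m, ?_, by simpa using hlast.symm⟩, fun t ht => hl _ ?_⟩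
  · simpa [← hp] using hget p le_rfl
  · have := hget t ht.le
    rw [List.getElem?_append_left (hp ▸ ht)] at this
    exact List.mem_of_getElem? this

theorem setOf_mem_dropLast_raySegment {p : ℕ} :
    {v | v ∈ (raySegment S 0 (p + 1)).dropLast} = {v | ∃ t ≤ p, S t = v} := by
  ext v
  rw [raySegment_succ p.zero_le, List.dropLast_concat]
  simp [mem_raySegment]

theorem StairExtends.exists_isStaircase_raySegment {n p p' : ℕ}
    (h : StairExtends D R ι n (raySegment S 0 (p + 1)) (raySegment S 0 (p' + 1))) :
    ∃ q, p + 1 ≤ q ∧ q ≤ p' ∧ IsStaircase D R (n := n) (fun k => ι k) (raySegment S q p') := by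
  obtain ⟨B, A, y, hBA, hlen, hA⟩ := h.exists_isStaircase
  have hA0 : 0 < A.length := by
    obtain ⟨-, -, -, -, -, -, hdipath⟩ := hA
    exact List.length_pos_iff.2 hdipath.1
  rw [raySegment_succ p'.zero_le] at hBA
  have hseg := (List.append_inj' hBA rfl).1
  have hlen' := congrArg List.length hseg
  simp only [raySegment, List.length_map, List.length_range, List.length_append] at hlen hlen'
  refine ⟨B.length, by omega, by omega, ?_⟩
  rwa [← drop_raySegment_zero (by omega), hseg, List.drop_left]

theorem StairExtends.notMem_downCl_initialSegment (hS : Function.Injective S) {n p p' k : ℕ}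
    (h : StairExtends D R ι n (raySegment S 0 (p + 1)) (raySegment S 0 (p' + 1)))
    (hpk : p < k) (hkp : k ≤ p') : S k ∉ DownCl R {v | ∃ t ≤ p, S t = v} := by
  have hk : S k ∉ {v | v ∈ (raySegment S 0 (p + 1)).dropLast} := by
    rw [setOf_mem_dropLast_raySegment]
    rintro ⟨t, ht, hSt⟩
    exact absurd (hS hSt) (by omega)
  rw [← setOf_mem_dropLast_raySegment]
  exact h.notMem_downCl _ ((mem_raySegment (Nat.zero_le _)).2 ⟨k, k.zero_le, by omega, rfl⟩) hk

theorem notMem_downCl_initialSegment_of_step {p : ℕ → ℕ} (hp : StrictMono p)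
    (hstep : ∀ n k, p n < k → k ≤ p (n + 1) → S k ∉ DownCl R {v | ∃ t ≤ p n, S t = v})
    {n k : ℕ} (hk : p n < k) : S k ∉ DownCl R {v | ∃ t ≤ p n, S t = v} := by
  suffices h : ∀ N, n ≤ N → k ≤ p N → S k ∉ DownCl R {v | ∃ t ≤ p n, S t = v} from
    h k (hp.le_apply.trans_lt hk).le hp.le_apply
  intro N hN
  induction N, hN using Nat.le_induction with
  | base => omega
  | succ N hN ih =>
    intro hkN
    rcases le_or_gt k (p N) with h | h
    · exact ih h
    · refine fun hmem => hstep N k h hkN (downCl_mono (fun v hv => ?_) hmem)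
      obtain ⟨t, ht, hv⟩ := hv
      exact ⟨t, ht.trans (hp.monotone hN), hv⟩

theorem StairExtends.length_lt {n : ℕ} {L L' : List V} (h : StairExtends D R ι n L L') :
    L.length < L'.length := by
  obtain ⟨B, A, y, rfl, hlen, -, -, -, -, -, -, hA⟩ := h.exists_isStaircase
  have := List.length_pos_iff.2 hA.1
  simp only [List.length_append, List.length_singleton]
  omega

theorem exists_seq_stairExtends (hray : ∀ i, IsOutRay D (R i)) (hR : Function.Injective2 R)
    (hι : Function.Injective ι)
    (hreach : ∀ k ≠ 0, ManyDisjointPaths D (Set.range (R (ι k))) (Set.range (R (ι 0))))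
    (hedge : ∀ k, ManyDisjointPathsAvoiding D (Set.range (R (ι k))) (Set.range (R (ι (k + 1))))
      (RaysUnion R)) :
    ∃ (L : ℕ → List V) (α : ℕ → ℕ), α 0 = 0 ∧ StrictMono α ∧
      (∀ n, IsDipath D (L n) ∧ EndsWithFirstEdge (R (ι (α n))) (L n)) ∧
      ∀ n, StairExtends D R ι (α (n + 1)) (L n) (L (n + 1)) := by
  have hstart : IsDipath D [R (ι 0) 0, R (ι 0) 1] ∧
      EndsWithFirstEdge (R (ι 0)) [R (ι 0) 0, R (ι 0) 1] :=
    ⟨((hray _).isDipathBetween_edge 0).isDipath, [], 0, rfl, by simp⟩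
  obtain ⟨f, hf0, hf, hstep⟩ := exists_seq_of_forall_exists
    (p := fun s : List V × ℕ => IsDipath D s.1 ∧ EndsWithFirstEdge (R (ι s.2)) s.1)
    (r := fun s s' => s.2 < s'.2 ∧ StairExtends D R ι s'.2 s.1 s'.1) (a := (_, 0)) hstart
    fun s hs => by
      obtain ⟨n, L, hn, hL, hfirst, hext⟩ := hs.2.exists_stairExtends hray hR hι hreach hedge hs.1
      exact ⟨(L, n), ⟨hL, hfirst⟩, hn, hext⟩
  exact ⟨fun n => (f n).1, fun n => (f n).2, congrArg Prod.snd hf0,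
    strictMono_nat_of_lt_succ fun n => (hstep n).1, hf, fun n => (hstep n).2⟩

theorem exists_isOutRay_of_stairExtends {L : ℕ → List V} {α : ℕ → ℕ} {r : ℕ → ℕ → V}
    (hL : ∀ n, IsDipath D (L n) ∧ EndsWithFirstEdge (r n) (L n))
    (hext : ∀ n, StairExtends D R ι (α n) (L n) (L (n + 1))) :
    ∃ (S : ℕ → V) (p : ℕ → ℕ), IsOutRay D S ∧ StrictMono p ∧
      ∀ n, L n = raySegment S 0 (p n + 1) := by
  obtain ⟨S, hS, hLS⟩ := exists_isOutRay_of_isPrefix_succ (fun n => (hL n).1)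
    (fun n => (hext n).isPrefix) fun n => (hext n).length_lt
  have hlen (n : ℕ) : 2 ≤ (L n).length := by
    obtain ⟨l, m, hl, -⟩ := (hL n).2
    simp [hl]
  refine ⟨S, fun n => (L n).length - 2, hS, strictMono_nat_of_lt_succ fun n => ?_, fun n => ?_⟩
  · exact Nat.sub_lt_sub_right (hlen n) (hext n).length_lt
  · rw [← Nat.sub_add_comm (hlen n)]
    exact hLS n

end Limit

theorem stmt12_general {I : Type*} (D : Digraph V) (R : I → ℕ → V)
    (hray : ∀ i, IsOutRay D (R i))
    (hdisj : ∀ i j, i ≠ j → ∀ n m, R i n ≠ R j m)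
    {ι : ℕ → I} (hι : Function.Injective ι)
    (hreach : ∀ k ≠ 0, ManyDisjointPaths D (Set.range (R (ι k))) (Set.range (R (ι 0))))
    (hedge : ∀ k, ManyDisjointPathsAvoiding D (Set.range (R (ι k)))
      (Set.range (R (ι (k + 1)))) (RaysUnion R)) :
    ∃ S : ℕ → V, IsOutRay D S ∧ ∃ α p : ℕ → ℕ, StrictMono α ∧ StrictMono p ∧
      (∀ n, ∃ m, R (ι (α n)) m = S (p n) ∧ R (ι (α n)) (m + 1) = S (p n + 1)) ∧
      ∀ n : ℕ,
        (∃ q, p n + 1 ≤ q ∧ q ≤ p (n + 1) ∧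
          IsStaircase D R (n := α (n + 1) - α 0) (fun k => ι (α 0 + k.val))
            ((List.range (p (n + 1) - q + 1)).map fun m => S (q + m))) ∧
        (∀ k, p (n + 1) + 1 ≤ k → S k ∉ DownCl R {v | ∃ t ≤ p (n + 1), S t = v}) ∧
        (∀ t, t < p (n + 1) → S t ∉ Set.range (R (ι (α (n + 1))))) := by
  have hR := injective2_of_isOutRay_of_disjoint hray hdisj
  obtain ⟨L, α, hα0, hα, hL, hext⟩ := exists_seq_stairExtends hray hR hι hreach hedge
  obtain ⟨S, p, hS, hp, hLS⟩ := exists_isOutRay_of_stairExtends hL hext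
  have hfirst (n : ℕ) := (hLS n ▸ (hL n).2).of_raySegment
  replace hext (n : ℕ) := hLS n ▸ hLS (n + 1) ▸ hext n
  refine ⟨S, hS, α, p, hα, hp, fun n => (hfirst n).1, fun n => ⟨?_, fun k hk => ?_,
    (hfirst (n + 1)).2⟩⟩
  · rw [hα0]
    simp only [Nat.zero_add]
    exact (hext n).exists_isStaircase_raySegment
  · exact notMem_downCl_initialSegment_of_step hp
      (fun n k => (hext n).notMem_downCl_initialSegment hS.1) hk

/-- Claim 4.3: given an infinite family of disjoint equivalent out-rays forming an
out-ray in `D^∞`, there are an out-ray `S`, indices `α` and edge positions `p` along `S`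
with `S (p n) S (p n + 1)` an edge of `R (α n)`, such that for each `n`: a terminal
segment of `S` between the `n`-th and `(n+1)`-st chosen edge is a staircase through
`R (α 0), R (α 0 + 1), …, R (α (n+1))`; the tail of `S` after the `(n+1)`-st edge avoids
the downward closure of the initial segment of `S`; and `S (p (n+1))` is the first vertex
of `S` on `R (α (n+1))`. -/
theorem stmt12 (D : Digraph V) (R : ℕ → ℕ → V)
    (hray : ∀ i, IsOutRay D (R i))
    (hdisj : ∀ i j, i ≠ j → ∀ n m, R i n ≠ R j m)
    (hequiv : ∀ i j, i ≠ j → EquivRays D (R i) (R j))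
    (hedge : ∀ i, ManyDisjointPathsAvoiding D (Set.range (R i))
      (Set.range (R (i + 1))) (RaysUnion R)) :
    ∃ S : ℕ → V, IsOutRay D S ∧ ∃ α p : ℕ → ℕ, StrictMono α ∧ StrictMono p ∧
      (∀ n, ∃ m, R (α n) m = S (p n) ∧ R (α n) (m + 1) = S (p n + 1)) ∧
      ∀ n : ℕ,
        (∃ q, p n + 1 ≤ q ∧ q ≤ p (n + 1) ∧
          IsStaircase D R (n := α (n + 1) - α 0) (fun k => α 0 + k.val)
            ((List.range (p (n + 1) - q + 1)).map fun m => S (q + m))) ∧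
        (∀ k, p (n + 1) + 1 ≤ k → S k ∉ DownCl R {v | ∃ t ≤ p (n + 1), S t = v}) ∧
        (∀ t, t < p (n + 1) → S t ∉ Set.range (R (α (n + 1)))) := by
  exact stmt12_general D R hray hdisj Function.injective_id (fun k hk => (hequiv k 0 hk).1) hedge
end

section
/- There exists a dominated directed necklace grid (with vertical necklaces isomorphic to bidirected rays and arches being single edges) that contains no bidirected necklace grid as a subgraph. -/
variable {V : Type*}

/-- Reachability by a directed path with all vertices in `s`. -/
def ReachOn (D : Digraph V) (s : Set V) : V → V → Prop :=
  Relation.ReflTransGen (fun a b => a ∈ s ∧ b ∈ s ∧ D.Adj a b)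

def StrongOn (D : Digraph V) (s : Set V) : Prop :=
  ∀ u ∈ s, ∀ v ∈ s, ReachOn D s u v

/-- `H` witnesses that `N` is a necklace. -/
def IsNecklaceWitness (D : Digraph V) (N : Set V) (H : ℕ → Set V) : Prop :=
  (∀ n, (H n).Finite ∧ (H n).Nonempty ∧ StrongOn D (H n)) ∧
  N = ⋃ n, H n ∧
  ∀ i j : ℕ, (H i ∩ H j).Nonempty ↔ (i ≤ j + 1 ∧ j ≤ i + 1)

/-- The edges of `D` leaving or entering `N` with their `N`-endpoint in `K`. -/
def CrossEdgesAt (D : Digraph V) (N K : Set V) : Set (V × V) :=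
  {e | D.Adj e.1 e.2 ∧ ((e.1 ∈ K ∧ e.2 ∉ N) ∨ (e.2 ∈ K ∧ e.1 ∉ N))}

/-- Attachment restrictions for a vertical necklace in a necklace grid: at most one edge
leaves or enters the necklace in `H ℓ` for odd `ℓ`, no such edge meets
`H ℓ \ (H (ℓ-1) ∪ H (ℓ+1))` for even `ℓ`. -/
def NecklaceAttachOK (D : Digraph V) (N : Set V) (H : ℕ → Set V) : Prop :=
  (∀ l, Odd l → (CrossEdgesAt D N (H l)).Subsingleton) ∧
  (∀ l, Even l → CrossEdgesAt D N (H l \ (H (l - 1) ∪ H (l + 1))) = ∅)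

/-- `u v` is an edge of the path `L`. -/
def ConsecIn (L : List V) (u v : V) : Prop := ∃ l₁ l₂, L = l₁ ++ u :: v :: l₂

def NeckUnion (neck : ℕ → Set V) : Set V := ⋃ i, neck i

/-- `L` meets all necklaces `0, …, n`, meets no other necklace, and meets them in
increasing order. -/
def VisitsUp (neck : ℕ → Set V) (n : ℕ) (L : List V) : Prop :=
  (∀ j ≤ n, ∃ v ∈ L, v ∈ neck j) ∧
  (∀ v ∈ L, ∀ j, v ∈ neck j → j ≤ n) ∧
  ∀ s t, ∀ hs : s < L.length, ∀ ht : t < L.length, s < t → ∀ j j',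
    L.get ⟨s, hs⟩ ∈ neck j → L.get ⟨t, ht⟩ ∈ neck j' → j ≤ j'

/-- `L` meets all necklaces `0, …, n`, meets no other necklace, and meets them in
decreasing order. -/
def VisitsDown (neck : ℕ → Set V) (n : ℕ) (L : List V) : Prop :=
  (∀ j ≤ n, ∃ v ∈ L, v ∈ neck j) ∧
  (∀ v ∈ L, ∀ j, v ∈ neck j → j ≤ n) ∧
  ∀ s t, ∀ hs : s < L.length, ∀ ht : t < L.length, s < t → ∀ j j',
    L.get ⟨s, hs⟩ ∈ neck j → L.get ⟨t, ht⟩ ∈ neck j' → j' ≤ j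

/-- Common part of the definition of a (subdivision of a) necklace grid: disjoint
vertical necklaces with attachment restrictions, pairwise disjoint girders occurring at
increasing heights on the necklaces, and every edge lying in a necklace or a girder. -/
structure IsNecklaceGridBase (G : Digraph V) (neck : ℕ → Set V)
    (H : ℕ → ℕ → Set V) (Gird : ℕ → List V) : Prop where
  disj : ∀ i j, i ≠ j → Disjoint (neck i) (neck j)
  neckwit : ∀ i, IsNecklaceWitness G (neck i) (H i)
  attach : ∀ i, NecklaceAttachOK G (neck i) (H i)
  gpath : ∀ n, 1 ≤ n → IsDipath G (Gird n)
  gdisj : ∀ m n, 1 ≤ m → 1 ≤ n → m ≠ n → ListsDisjoint (Gird m) (Gird n)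
  gheight : ∀ m n, 1 ≤ m → m < n → ∀ i l l',
    (∃ v ∈ Gird m, v ∈ H i l) → (∃ v ∈ Gird n, v ∈ H i l') → l < l'
  edges : ∀ u v, G.Adj u v →
    (∃ i, u ∈ neck i ∧ v ∈ neck i) ∨ ∃ n, 1 ≤ n ∧ ConsecIn (Gird n) u v

/-- A bidirected necklace grid: each girder is an upward staircase from necklace `0` to
necklace `n` followed by a downward staircase back to necklace `0`. -/
def IsBidirNecklaceGrid (G : Digraph V) (neck : ℕ → Set V)
    (H : ℕ → ℕ → Set V) (Gird : ℕ → List V) : Prop :=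
  IsNecklaceGridBase G neck H Gird ∧ ∀ n, 1 ≤ n → ∃ U W : List V,
    Gird n = U ++ W ∧ U ≠ [] ∧ W ≠ [] ∧
    StartsIn U (neck 0) ∧ EndsIn U (neck n) ∧ VisitsUp neck n U ∧
    StartsIn W (neck n) ∧ EndsIn W (neck 0) ∧ VisitsDown neck n W

/-- An outward-oriented dominated directed necklace grid: each girder is an upward
staircase from necklace `0` to necklace `n` followed by an arch back to necklace `0`
internally avoiding all necklaces. -/
def IsDomDirNecklaceGridOut (G : Digraph V) (neck : ℕ → Set V)
    (H : ℕ → ℕ → Set V) (Gird : ℕ → List V) : Prop :=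
  IsNecklaceGridBase G neck H Gird ∧ ∀ n, 1 ≤ n → ∃ U W : List V,
    Gird n = U ++ W ∧ U ≠ [] ∧ W ≠ [] ∧
    StartsIn U (neck 0) ∧ EndsIn U (neck n) ∧ VisitsUp neck n U ∧
    StartsIn W (neck n) ∧ EndsIn W (neck 0) ∧ InternallyAvoids W (NeckUnion neck)

/-- An inward-oriented dominated directed necklace grid: each girder is an arch from
necklace `0` to necklace `n` followed by a downward staircase back to necklace `0`. -/
def IsDomDirNecklaceGridIn (G : Digraph V) (neck : ℕ → Set V)
    (H : ℕ → ℕ → Set V) (Gird : ℕ → List V) : Prop :=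
  IsNecklaceGridBase G neck H Gird ∧ ∀ n, 1 ≤ n → ∃ W U : List V,
    Gird n = W ++ U ∧ W ≠ [] ∧ U ≠ [] ∧
    StartsIn W (neck 0) ∧ EndsIn W (neck n) ∧ InternallyAvoids W (NeckUnion neck) ∧
    StartsIn U (neck n) ∧ EndsIn U (neck 0) ∧ VisitsDown neck n U

/-- The vertical necklaces are bidirected rays `𝒟(S)`. -/
def NecksAreBidirRays (G : Digraph V) (neck : ℕ → Set V) (r : ℕ → ℕ → V) : Prop :=
  ∀ i, Function.Injective (r i) ∧ neck i = Set.range (r i) ∧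
    ∀ n, G.Adj (r i n) (r i (n + 1)) ∧ G.Adj (r i (n + 1)) (r i n)

/-- The arches are single edges, `archE n` being the arch of the `n`-th girder. -/
def ArchesAreEdges (neck : ℕ → Set V) (Gird : ℕ → List V) (archE : ℕ → V × V) : Prop :=
  ∀ n, 1 ≤ n → ∃ U, Gird n = U ++ [(archE n).1, (archE n).2] ∧
    (archE n).1 ∈ neck n ∧ (archE n).2 ∈ neck 0

/-!
Take the columns of `ℕ × ℕ` as vertical rays and let the `n`-th girder climb at height `4 n + 2`
from column `0` to column `n` and jump back by an arch. Every way back to a smaller column then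
leads through column `0`. Deleting the arches leaves a planar graph in which columns never
decrease, so disjoint walks in it keep their vertical order; hence of two disjoint necklaces only
one can meet column `0` infinitely often. A necklace meeting column `0` finitely often coincides,
up to finitely many vertices, with a single column. So all but finitely many necklaces of a
bidirected necklace grid would be columns, and a downward staircase avoiding the finitely many
exceptions cannot pass from a column to a smaller one without crossing all columns before the
latter, which happens in the wrong order.
-/

open Filter

/-! ### Walks and strong connectivity -/

lemma ReachOn.mono {D D' : Digraph V} {s t : Set V} {u v : V} (h : ReachOn D s u v) (hst : s ⊆ t)
    (hD : ∀ a ∈ s, ∀ b ∈ s, D.Adj a b → D'.Adj a b) : ReachOn D' t u v :=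
  Relation.ReflTransGen.mono (fun _ _ e => ⟨hst e.1, hst e.2.1, hD _ e.1 _ e.2.1 e.2.2⟩) _ _ h

lemma ReachOn.mem {D : Digraph V} {s : Set V} {u v : V} (h : ReachOn D s u v) (hu : u ∈ s) :
    v ∈ s := by
  induction h with
  | refl => exact hu
  | tail _ hvw _ => exact hvw.2.1

lemma reachOn_getElem_of_isChain {D : Digraph V} {L : List V} (hL : L.IsChain D.Adj)
    {s : Set V} {i j : ℕ} (hij : i ≤ j) (hj : j < L.length)
    (hs : ∀ k, i ≤ k → ∀ hk : k ≤ j, L[k] ∈ s) : ReachOn D s L[i] L[j] := by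
  induction j, hij using Nat.le_induction with
  | base => exact .refl
  | succ j hij ih =>
    exact (ih (by omega) fun k hik hkj => hs k hik (by omega)).tail
      ⟨hs j hij (by omega), hs (j + 1) (by omega) le_rfl, List.isChain_iff_getElem.1 hL j hj⟩

lemma StrongOn.union {D : Digraph V} {s t : Set V} (hs : StrongOn D s) (ht : StrongOn D t)
    (hst : (s ∩ t).Nonempty) : StrongOn D (s ∪ t) := by
  obtain ⟨c, hcs, hct⟩ := hst
  have through_c : ∀ u ∈ s ∪ t, ReachOn D (s ∪ t) u c ∧ ReachOn D (s ∪ t) c u := by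
    rintro u (hu | hu)
    · exact ⟨(hs u hu c hcs).mono Set.subset_union_left fun _ _ _ _ => id,
        (hs c hcs u hu).mono Set.subset_union_left fun _ _ _ _ => id⟩
    · exact ⟨(ht u hu c hct).mono Set.subset_union_right fun _ _ _ _ => id,
        (ht c hct u hu).mono Set.subset_union_right fun _ _ _ _ => id⟩
  exact fun u hu v hv => (through_c u hu).1.trans (through_c v hv).2

lemma isDipath_map_range {D : Digraph V} {f : ℕ → V} {n : ℕ} (hinj : Set.InjOn f (Set.Iic n))
    (hadj : ∀ k < n, D.Adj (f k) (f (k + 1))) : IsDipath D ((List.range (n + 1)).map f) := by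
  refine ⟨by simp, List.nodup_range.map_on fun a ha b hb => hinj ?_ ?_,
    (List.isChain_map f).2 ((List.isChain_range_succ _ n).2 hadj)⟩
  · exact Nat.lt_succ_iff.1 (List.mem_range.1 ha)
  · exact Nat.lt_succ_iff.1 (List.mem_range.1 hb)

lemma consecIn_map_range (f : ℕ → V) {n k : ℕ} (hk : k < n) :
    ConsecIn ((List.range (n + 1)).map f) (f k) (f (k + 1)) := by
  set L := (List.range (n + 1)).map f
  have hlen : k + 1 < L.length := by simpa [L] using hk
  refine ⟨L.take k, L.drop (k + 2), ?_⟩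
  have hk₀ : f k = L[k] := by simp [L]
  have hk₁ : f (k + 1) = L[k + 1] := by simp [L]
  rw [hk₀, hk₁, ← List.drop_eq_getElem_cons, ← List.drop_eq_getElem_cons, List.take_append_drop]

lemma eventually_forall_mem_of_cofinite {A : ℕ → Set V} (hA : ∀ v, ∀ᶠ n in atTop, v ∉ A n)
    {P : V → Prop} (hP : ∀ᶠ v in cofinite, P v) : ∀ᶠ n in atTop, ∀ v ∈ A n, P v := by
  filter_upwards [(eventually_all_finite (eventually_cofinite.1 hP)).2 fun v _ => hA v]
    with n hn v hv
  by_contra hPv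
  exact hn v hPv hv

/-! ### Necklaces -/

namespace IsNecklaceWitness

variable {D : Digraph V} {N : Set V} {H : ℕ → Set V}

lemma strongOn (h : IsNecklaceWitness D N H) : StrongOn D N := by
  have hacc : ∀ n, StrongOn D (Set.accumulate H n) := by
    intro n
    induction n with
    | zero => simpa only [Set.accumulate_zero_nat] using (h.1 0).2.2
    | succ n ih =>
      rw [Set.accumulate_succ]
      refine ih.union (h.1 (n + 1)).2.2 (((h.2.2 n (n + 1)).2 (by omega)).mono ?_)
      exact Set.inter_subset_inter_left _ (Set.subset_accumulate)
  intro u hu v hv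
  rw [h.2.1, Set.mem_iUnion] at hu hv
  obtain ⟨i, hi⟩ := hu
  obtain ⟨j, hj⟩ := hv
  refine (hacc (max i j) u (Set.mem_accumulate.2 ⟨i, le_max_left i j, hi⟩)
    v (Set.mem_accumulate.2 ⟨j, le_max_right i j, hj⟩)).mono ?_ fun _ _ _ _ => id
  rw [h.2.1, ← Set.iUnion_accumulate]
  exact Set.subset_iUnion _ _

lemma mono {D' : Digraph V} (h : IsNecklaceWitness D N H) (hD : ∀ u v, D.Adj u v → D'.Adj u v) :
    IsNecklaceWitness D' N H :=
  ⟨fun n => ⟨(h.1 n).1, (h.1 n).2.1, fun u hu v hv =>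
    ((h.1 n).2.2 u hu v hv).mono subset_rfl fun a _ b _ => hD a b⟩, h.2⟩

lemma tail (h : IsNecklaceWitness D N H) (L : ℕ) :
    IsNecklaceWitness D (⋃ l, H (L + l)) (fun l => H (L + l)) :=
  ⟨fun n => h.1 (L + n), rfl, fun i j => (h.2.2 (L + i) (L + j)).trans (by omega)⟩

lemma eventually_mem_iff_mem_tail (h : IsNecklaceWitness D N H) (L : ℕ) :
    ∀ᶠ v in cofinite, v ∈ N ↔ v ∈ ⋃ l, H (L + l) := by
  have hfin : (⋃ l ∈ Set.Iio L, H l).Finite := (Set.finite_Iio L).biUnion fun l _ => (h.1 l).1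
  filter_upwards [hfin.compl_mem_cofinite] with v hv
  simp only [Set.mem_compl_iff, Set.mem_iUnion, Set.mem_Iio, exists_prop, not_exists,
    not_and] at hv
  rw [h.2.1, Set.mem_iUnion, Set.mem_iUnion]
  refine ⟨fun ⟨l, hl⟩ => ⟨l - L, ?_⟩, fun ⟨l, hl⟩ => ⟨L + l, hl⟩⟩
  rwa [Nat.add_sub_cancel' (not_lt.1 fun hlL => hv l hlL hl)]

lemma eventually_notMem (h : IsNecklaceWitness D N H) (v : V) : ∀ᶠ l in atTop, v ∉ H l := by
  by_cases hv : ∃ i, v ∈ H i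
  · obtain ⟨i, hi⟩ := hv
    filter_upwards [eventually_gt_atTop (i + 1)] with l hl hvl
    have := ((h.2.2 l i).1 ⟨v, hvl, hi⟩).1
    omega
  · exact .of_forall fun l hl => hv ⟨l, hl⟩

lemma infinite (h : IsNecklaceWitness D N H) : N.Infinite := fun hN => by
  obtain ⟨l, hl⟩ :=
    (eventually_forall_mem_of_cofinite h.eventually_notMem hN.compl_mem_cofinite).exists
  obtain ⟨v, hv⟩ := (h.1 l).2.1
  refine hl v hv ?_
  rw [h.2.1]
  exact Set.mem_iUnion_of_mem l hv

end IsNecklaceWitness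

/-! ### Links in bidirected necklace grids -/

lemma IsNecklaceGridBase.eventually_notMem_girder {G : Digraph V} {neck : ℕ → Set V}
    {H : ℕ → ℕ → Set V} {Gird : ℕ → List V} (h : IsNecklaceGridBase G neck H Gird) (v : V) :
    ∀ᶠ n in atTop, v ∉ Gird n := by
  by_cases hv : ∃ m, 1 ≤ m ∧ v ∈ Gird m
  · obtain ⟨m, hm, hvm⟩ := hv
    filter_upwards [eventually_gt_atTop m] with n hn
    exact h.gdisj m n hm (by omega) hn.ne v hvm
  · filter_upwards [eventually_ge_atTop 1] with n hn hvn
    exact hv ⟨n, hn, hvn⟩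

lemma VisitsDown.exists_reachOn {D : Digraph V} {neck : ℕ → Set V} {n p q s : ℕ} {W : List V}
    (hW : VisitsDown neck n W) (hchain : W.IsChain D.Adj)
    (hdisj : Disjoint (neck p) (neck q)) (hpq : p < q) (hqs : q < s) (hsn : s ≤ n) :
    ∃ u ∈ W, ∃ v ∈ W, u ∈ neck s ∧ v ∈ neck q ∧ ReachOn D {w | w ∈ W ∧ w ∉ neck p} u v := by
  obtain ⟨hmeet, -, hord⟩ := hW
  obtain ⟨u, huW, hu⟩ := hmeet s hsn
  obtain ⟨v, hvW, hv⟩ := hmeet q (hqs.le.trans hsn)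
  refine ⟨u, huW, v, hvW, hu, hv, ?_⟩
  obtain ⟨i, hi, rfl⟩ := List.getElem_of_mem huW
  obtain ⟨j, hj, rfl⟩ := List.getElem_of_mem hvW
  have hij : i ≤ j := by
    by_contra! hji
    exact absurd (hord j i hj hi hji q s hv hu) hqs.not_ge
  refine reachOn_getElem_of_isChain hchain hij hj fun k _ hkj => ⟨List.getElem_mem _, fun hk => ?_⟩
  rcases hkj.lt_or_eq with hlt | rfl
  · exact absurd (hord k j (hlt.trans hj) hj hlt p q hk hv) hpq.not_ge
  · exact Set.disjoint_left.1 hdisj hk hv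

lemma IsBidirNecklaceGrid.exists_reachOn {B : Digraph V} {neck : ℕ → Set V} {H : ℕ → ℕ → Set V}
    {Gird : ℕ → List V} (h : IsBidirNecklaceGrid B neck H Gird) {P : V → Prop}
    (hP : ∀ᶠ v in cofinite, P v) {p q s : ℕ} (hpq : p < q) (hqs : q < s) :
    ∃ u v, (P u ∧ u ∈ neck s) ∧ (P v ∧ v ∈ neck q) ∧ ReachOn B {w | P w ∧ w ∉ neck p} u v := by
  obtain ⟨hbase, hgird⟩ := h
  obtain ⟨n, hnP, hsn⟩ := ((eventually_forall_mem_of_cofinite (A := fun n => {v | v ∈ Gird n})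
    hbase.eventually_notMem_girder hP).and (eventually_ge_atTop s)).exists
  have hn : 1 ≤ n := by omega
  obtain ⟨U, W, hUW, -, -, -, -, -, -, -, hW⟩ := hgird n hn
  have hchain : (Gird n).IsChain B.Adj := (hbase.gpath n hn).2.2
  rw [hUW] at hchain
  have hWP : ∀ w ∈ W, P w := fun w hw => hnP w (hUW ▸ List.mem_append_right U hw)
  obtain ⟨u, huW, v, hvW, hu, hv, huv⟩ :=
    hW.exists_reachOn hchain.right_of_append (hbase.disj p q hpq.ne) hpq hqs hsn
  exact ⟨u, v, ⟨hWP u huW, hu⟩, ⟨hWP v hvW, hv⟩,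
    huv.mono (fun w hw => ⟨hWP w hw.1, hw.2⟩) fun _ _ _ _ => id⟩

/-! ### The grid -/

/-- The dominated directed quarter-grid without its arches: the columns of `ℕ × ℕ` are bidirected
rays, and `(i, 4 n + 3)` sends an edge to `(i + 1, 4 n + 2)` for all `i < n`. -/
def staircaseGrid : Digraph (ℕ × ℕ) where
  Adj u v := (u.1 = v.1 ∧ (u.2 = v.2 + 1 ∨ v.2 = u.2 + 1)) ∨
    ∃ n, v.1 = u.1 + 1 ∧ v.1 ≤ n ∧ u.2 = 4 * n + 3 ∧ v.2 = 4 * n + 2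

/-- The dominated directed quarter-grid: the arch of the `n`-th girder leads from `(n, 4 n + 3)` to
`(0, 4 n + 1)`, just below the start `(0, 4 n + 2)` of that girder. -/
def archGrid : Digraph (ℕ × ℕ) where
  Adj u v := staircaseGrid.Adj u v ∨ ∃ n, 1 ≤ n ∧ u = (n, 4 * n + 3) ∧ v = (0, 4 * n + 1)

/-- The `i`-th vertical necklace of the quarter-grid. -/
def column (i : ℕ) : Set (ℕ × ℕ) := Set.range (Prod.mk i)

/-- The `l`-th bead of the `i`-th column: the two ends of its `l`-th edge, so that successive beads
overlap. -/
def columnPiece (i l : ℕ) : Set (ℕ × ℕ) := {(i, l), (i, l + 1)}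

/-- The `k`-th vertex of the `n`-th girder: each column `k / 2` is entered at height `4 n + 2` and
left at height `4 n + 3`, until the arch leads to `(0, 4 n + 1)`. -/
def girderVertex (n k : ℕ) : ℕ × ℕ :=
  if k ≤ 2 * n + 1 then (k / 2, 4 * n + 2 + k % 2) else (0, 4 * n + 1)

/-- The `n`-th girder of the quarter-grid, as a list of vertices. -/
def girder (n : ℕ) : List (ℕ × ℕ) := (List.range (2 * n + 3)).map (girderVertex n)

lemma mem_column {i : ℕ} {v : ℕ × ℕ} : v ∈ column i ↔ v.1 = i :=
  ⟨fun ⟨_, hk⟩ => hk ▸ rfl, fun hv => ⟨v.2, Prod.ext hv.symm rfl⟩⟩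

lemma mem_columnPiece {i l : ℕ} {v : ℕ × ℕ} :
    v ∈ columnPiece i l ↔ v.1 = i ∧ (v.2 = l ∨ v.2 = l + 1) := by
  simp only [columnPiece, Set.mem_insert_iff, Set.mem_singleton_iff, Prod.ext_iff]
  omega

lemma girderVertex_of_le {n k : ℕ} (hk : k ≤ 2 * n + 1) :
    girderVertex n k = (k / 2, 4 * n + 2 + k % 2) := if_pos hk

lemma girderVertex_arch_head (n : ℕ) : girderVertex n (2 * n + 2) = (0, 4 * n + 1) :=
  if_neg (by omega)

lemma girderVertex_arch_tail (n : ℕ) : girderVertex n (2 * n + 1) = (n, 4 * n + 3) := by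
  rw [girderVertex_of_le le_rfl, Prod.mk.injEq]
  omega

lemma girder_eq_append (n : ℕ) : girder n =
    (List.range (2 * n + 1)).map (girderVertex n) ++ [(n, 4 * n + 3), (0, 4 * n + 1)] := by
  simp [girder, List.range_succ, girderVertex_arch_head, girderVertex_arch_tail]

lemma height_of_mem_girder {n : ℕ} {v : ℕ × ℕ} (hv : v ∈ girder n) :
    4 * n + 1 ≤ v.2 ∧ v.2 ≤ 4 * n + 3 := by
  obtain ⟨k, -, rfl⟩ := List.mem_map.1 hv
  unfold girderVertex
  split_ifs <;> simp only <;> omega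

lemma girderVertex_injOn (n : ℕ) : Set.InjOn (girderVertex n) (Set.Iic (2 * n + 2)) := by
  intro a ha b hb hab
  simp only [Set.mem_Iic] at ha hb
  unfold girderVertex at hab
  split_ifs at hab <;> simp only [Prod.mk.injEq] at hab <;> omega

lemma archGrid_adj_girderVertex {n k : ℕ} (hn : 1 ≤ n) (hk : k < 2 * n + 2) :
    archGrid.Adj (girderVertex n k) (girderVertex n (k + 1)) := by
  rcases (Nat.lt_succ_iff.1 hk).lt_or_eq with hlt | rfl
  · rw [girderVertex_of_le hlt.le, girderVertex_of_le hlt]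
    left
    rcases Nat.mod_two_eq_zero_or_one k with hk2 | hk2
    · left
      simp only
      omega
    · right
      exact ⟨n, by simp only; omega⟩
  · rw [girderVertex_arch_tail, girderVertex_arch_head]
    exact Or.inr ⟨n, hn, rfl, rfl⟩

lemma isDipath_girder {n : ℕ} (hn : 1 ≤ n) : IsDipath archGrid (girder n) :=
  isDipath_map_range (girderVertex_injOn n) fun _ => archGrid_adj_girderVertex hn

lemma consecIn_girder_of_climb {n : ℕ} {u v : ℕ × ℕ} (huv : v.1 = u.1 + 1) (hn : v.1 ≤ n)
    (hu : u.2 = 4 * n + 3) (hv : v.2 = 4 * n + 2) : ConsecIn (girder n) u v := by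
  have hu' : girderVertex n (2 * u.1 + 1) = u := by
    rw [girderVertex_of_le (by omega), Prod.ext_iff]
    simp only
    omega
  have hv' : girderVertex n (2 * u.1 + 1 + 1) = v := by
    rw [girderVertex_of_le (by omega), Prod.ext_iff]
    simp only
    omega
  have := consecIn_map_range (girderVertex n) (by omega : 2 * u.1 + 1 < 2 * n + 2)
  rwa [hu', hv'] at this

lemma consecIn_girder_arch (n : ℕ) : ConsecIn (girder n) (n, 4 * n + 3) (0, 4 * n + 1) :=
  ⟨_, [], girder_eq_append n⟩

lemma strongOn_columnPiece (i l : ℕ) : StrongOn archGrid (columnPiece i l) := by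
  intro u hu v hv
  by_cases huv : u = v
  · exact huv ▸ .refl
  · refine .single ⟨hu, hv, Or.inl (Or.inl ?_)⟩
    rw [mem_columnPiece] at hu hv
    rw [Prod.ext_iff] at huv
    omega

lemma isNecklaceWitness_column (i : ℕ) :
    IsNecklaceWitness archGrid (column i) (columnPiece i) := by
  refine ⟨fun n => ⟨by simp [columnPiece], by simp [columnPiece], strongOn_columnPiece i n⟩,
    ?_, fun a b => ⟨?_, fun hab => ⟨(i, max a b), ?_, ?_⟩⟩⟩
  · ext v
    simp only [Set.mem_iUnion, mem_columnPiece, mem_column]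
    exact ⟨fun hv => ⟨v.2, hv, Or.inl rfl⟩, fun ⟨_, hv⟩ => hv.1⟩
  · rintro ⟨v, ha, hb⟩
    rw [mem_columnPiece] at ha hb
    omega
  all_goals
    rw [mem_columnPiece]
    simp only [true_and]
    omega

lemma necklaceAttachOK_column (i : ℕ) :
    NecklaceAttachOK archGrid (column i) (columnPiece i) := by
  refine ⟨fun l ⟨m, hm⟩ => ?_, fun l ⟨m, hm⟩ => ?_⟩
  · rintro ⟨u, v⟩ ⟨huv, h⟩ ⟨u', v'⟩ ⟨huv', h'⟩
    simp only [mem_columnPiece, mem_column, archGrid, staircaseGrid, Prod.ext_iff]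
      at huv h huv' h' ⊢
    rcases huv with (huv | ⟨n, huv⟩) | ⟨n, huv⟩ <;>
      rcases huv' with (huv' | ⟨n', huv'⟩) | ⟨n', huv'⟩ <;> omega
  · have hempty : columnPiece i l \ (columnPiece i (l - 1) ∪ columnPiece i (l + 1)) = ∅ := by
      ext v
      simp only [Set.mem_sdiff, Set.mem_union, mem_columnPiece, Set.mem_empty_iff_false, iff_false]
      omega
    simp [hempty, CrossEdgesAt]

lemma isNecklaceGridBase_archGrid :
    IsNecklaceGridBase archGrid column columnPiece girder where
  disj i j hij := Set.disjoint_left.2 fun v hi hj =>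
    hij ((mem_column.1 hi).symm.trans (mem_column.1 hj))
  neckwit := isNecklaceWitness_column
  attach := necklaceAttachOK_column
  gpath _ := isDipath_girder
  gdisj m n _ _ hmn v hm hn := by
    have := height_of_mem_girder hm
    have := height_of_mem_girder hn
    omega
  gheight := by
    rintro m n - hmn i l l' ⟨v, hv, hvl⟩ ⟨w, hw, hwl⟩
    have := height_of_mem_girder hv
    have := height_of_mem_girder hw
    rw [mem_columnPiece] at hvl hwl
    omega
  edges := by
    rintro u v ((⟨huv, -⟩ | ⟨n, huv, hn, hu, hv⟩) | ⟨n, hn, rfl, rfl⟩)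
    · exact Or.inl ⟨v.1, mem_column.2 huv, mem_column.2 rfl⟩
    · exact Or.inr ⟨n, by omega, consecIn_girder_of_climb huv hn hu hv⟩
    · exact Or.inr ⟨n, hn, consecIn_girder_arch n⟩

lemma visitsUp_girder (n : ℕ) :
    VisitsUp column n ((List.range (2 * n + 1)).map (girderVertex n)) := by
  have hcol : ∀ k < 2 * n + 1, (girderVertex n k).1 = k / 2 := fun k hk => by
    rw [girderVertex_of_le (by omega)]
  refine ⟨fun j hj => ⟨girderVertex n (2 * j), ?_, ?_⟩, fun v hv j hvj => ?_, ?_⟩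
  · exact List.mem_map_of_mem (List.mem_range.2 (by omega))
  · rw [mem_column, hcol _ (by omega)]
    omega
  · obtain ⟨k, hk, rfl⟩ := List.mem_map.1 hv
    rw [List.mem_range] at hk
    rw [mem_column, hcol k hk] at hvj
    omega
  · intro s t hs ht hst j j' hj hj'
    simp only [List.length_map, List.length_range] at hs ht
    simp only [mem_column, List.get_eq_getElem, List.getElem_map, List.getElem_range,
      hcol s hs, hcol t ht] at hj hj'
    omega

lemma isDomDirNecklaceGridOut_archGrid :
    IsDomDirNecklaceGridOut archGrid column columnPiece girder := by
  refine ⟨isNecklaceGridBase_archGrid, fun n _ => ⟨_, _, girder_eq_append n, by simp, by simp,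
    ⟨girderVertex n 0, ?_, by simp [List.range_succ_eq_map]⟩,
    ⟨girderVertex n (2 * n), ?_, by simp [List.range_succ]⟩, visitsUp_girder n,
    ⟨_, ⟨_, rfl⟩, rfl⟩, ⟨_, ⟨_, rfl⟩, rfl⟩, by simp [InternallyAvoids, Internals]⟩⟩
  · rw [girderVertex_of_le (by omega), mem_column]
  · rw [girderVertex_of_le (by omega), mem_column]
    simp

lemma necksAreBidirRays_archGrid : NecksAreBidirRays archGrid column Prod.mk := fun i =>
  ⟨Prod.mk_right_injective i, rfl, fun _ =>
    ⟨Or.inl (Or.inl ⟨rfl, Or.inr rfl⟩), Or.inl (Or.inl ⟨rfl, Or.inl rfl⟩)⟩⟩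

lemma archesAreEdges_archGrid :
    ArchesAreEdges column girder fun n => ((n, 4 * n + 3), (0, 4 * n + 1)) :=
  fun n _ => ⟨_, girder_eq_append n, ⟨_, rfl⟩, ⟨_, rfl⟩⟩

/-! ### Disjoint walks without arches do not cross -/

section staircaseGrid

variable {R R' : Set (ℕ × ℕ)} {u v u' v' : ℕ × ℕ}

lemma column_le_of_reachOn (huv : ReachOn staircaseGrid R u v) : u.1 ≤ v.1 := by
  induction huv with
  | refl => exact le_rfl
  | tail _ hvw ih =>
    obtain ⟨-, -, hvw | ⟨n, hvw⟩⟩ := hvw <;> omega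

lemma exists_exit_of_reachOn (huv : ReachOn staircaseGrid R u v) {n : ℕ} (hu : u.1 ≤ n)
    (hv : n < v.1) : ∃ m > n, ReachOn staircaseGrid R u (n, 4 * m + 3) := by
  induction huv with
  | refl => omega
  | @tail w v huw hwv ih =>
    by_cases hw : n < w.1
    · exact ih hw
    · obtain ⟨-, -, h | ⟨m, h₁, h₂, h₃, -⟩⟩ := hwv
      · omega
      · have hwn : w = (n, 4 * m + 3) := Prod.ext (by simp only; omega) h₃
        exact ⟨m, by omega, hwn ▸ huw⟩

lemma height_lt_of_entries_le {h : ℕ} (huv : ReachOn staircaseGrid R u v) (hR : (v.1, h) ∉ R)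
    (hstart : u.1 = v.1 → u.2 < h)
    (hentry : ∀ w, ReachOn staircaseGrid R u w → w.1 + 1 = v.1 → w.2 ≤ h) : v.2 < h := by
  induction huv with
  | refl => exact hstart rfl
  | @tail w v huw hwv ih =>
    obtain ⟨-, hvR, ⟨hcol, hstep⟩ | ⟨n, hcol, -, hw, hv⟩⟩ := hwv
    · have hwh : w.2 < h := ih (hcol ▸ hR) (hcol ▸ hstart) (hcol ▸ hentry)
      have hvh : v.2 ≠ h := by
        rintro rfl
        exact hR hvR
      omega
    · have := hentry w huw hcol.symm
      omega

lemma height_lt_of_column_eq (huv : ReachOn staircaseGrid R u v) (hcol : u.1 = v.1) {h : ℕ}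
    (hR : (v.1, h) ∉ R) (hu : u.2 < h) : v.2 < h :=
  height_lt_of_entries_le huv hR (fun _ => hu) fun w huw hw => by
    have := column_le_of_reachOn huw
    omega

lemma height_lt_of_disjoint_walks (hdisj : Disjoint R R') (hu : u ∈ R) (hu' : u' ∈ R')
    (huv : ReachOn staircaseGrid R u v) (hu'v' : ReachOn staircaseGrid R' u' v')
    (hcol : u'.1 = u.1) (hlt : u'.2 < u.2) (hcol' : v'.1 = v.1) : v'.2 < v.2 := by
  have notMem_R' : ∀ w ∈ R, w ∉ R' := fun w hw => Set.disjoint_left.1 hdisj hw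
  induction huv generalizing v' with
  | refl =>
    exact height_lt_of_column_eq hu'v' (hcol.trans hcol'.symm) (hcol' ▸ notMem_R' u hu) hlt
  | @tail w v huw hwv ih =>
    obtain ⟨-, hvR, ⟨hwv_col, hstep⟩ | ⟨n, hwv_col, -, hw, hv⟩⟩ := hwv
    · have hv'w : v'.2 < w.2 := ih hu'v' (hcol'.trans hwv_col.symm)
      have hne : v'.2 ≠ v.2 := fun h =>
        notMem_R' v hvR (Prod.ext hcol' h ▸ hu'v'.mem hu')
      omega
    · have huw_col := column_le_of_reachOn huw
      refine height_lt_of_entries_le hu'v' (hcol' ▸ notMem_R' v hvR) (fun _ => by omega)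
        fun w' hu'w' hw' => ?_
      have hw'w : w'.2 < w.2 := ih hu'w' (by omega)
      omega

end staircaseGrid

/-! ### Necklaces in the grid -/

lemma exists_arch_of_reachOn {R : Set (ℕ × ℕ)} {A : Set ℕ} {a c : ℕ} (ha : a ∈ A)
    (haR : (0, a) ∈ R) (hac : ReachOn archGrid R (0, a) (0, c))
    (hsep : ∀ b ∈ A, (0, b) ∈ R → ¬ ReachOn staircaseGrid R (0, b) (0, c)) :
    ∃ b ∈ A, (0, b) ∈ R ∧ ∃ n, 4 * n + 1 ∉ A ∧
      ReachOn staircaseGrid R (0, b) (n, 4 * n + 3) := by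
  by_contra! hno
  have last_landing : ∀ v, ReachOn archGrid R (0, a) v →
      ∃ b ∈ A, (0, b) ∈ R ∧ ReachOn staircaseGrid R (0, b) v := by
    intro v hav
    induction hav with
    | refl => exact ⟨a, ha, haR, .refl⟩
    | tail _ huv ih =>
      obtain ⟨b, hbA, hbR, hbu⟩ := ih
      obtain ⟨huR, hvR, huv | ⟨n, -, rfl, rfl⟩⟩ := huv
      · exact ⟨b, hbA, hbR, hbu.tail ⟨huR, hvR, huv⟩⟩
      · exact ⟨4 * n + 1, by_contra fun hn => hno b hbA hbR n hn hbu, hvR, .refl⟩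
  obtain ⟨b, hbA, hbR, hbc⟩ := last_landing _ hac
  exact hsep b hbA hbR hbc

lemma finite_column_zero_of_disjoint {N N' : Set (ℕ × ℕ)} (hN : StrongOn archGrid N)
    (hN' : StrongOn archGrid N') (hdisj : Disjoint N N') (hinf : {k | (0, k) ∈ N}.Infinite) :
    {k | (0, k) ∈ N'}.Finite := by
  by_contra hinf'
  obtain ⟨y, hy⟩ := hinf.nonempty
  obtain ⟨x, hx, hyx⟩ := Set.Infinite.exists_gt hinf' y
  obtain ⟨z, hz, hxz⟩ := hinf.exists_gt x
  -- `N` has to get from `z` down to `y` past `x`.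
  obtain ⟨z', hxz', hz', n, hn, hwalk⟩ :=
    exists_arch_of_reachOn (A := Set.Ioi x) hxz hz (hN _ hz _ hy) fun b hxb hb hby =>
      have hxN : Disjoint N {(0, x)} :=
        Set.disjoint_singleton_right.2 fun h => Set.disjoint_left.1 hdisj h hx
      have hxy := height_lt_of_disjoint_walks hxN hb (Set.mem_singleton _) hby .refl rfl hxb rfl
      hyx.not_gt hxy
  obtain ⟨w, hw, hzw⟩ := Set.Infinite.exists_gt hinf' z'
  -- `N'` has to get from `x` up to `w` past `z'`.
  obtain ⟨x', hx'z', hx', n', hn', hwalk'⟩ :=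
    exists_arch_of_reachOn (A := Set.Iio z') hxz' hx (hN' _ hx _ hw) fun b hbz _ hbw =>
      have hwz := height_lt_of_column_eq hbw rfl (Set.disjoint_left.1 hdisj hz') hbz
      hzw.not_gt hwz
  simp only [Set.mem_Ioi, Set.mem_Iio, not_lt] at hxz' hn hn'
  obtain ⟨m, hm, hexit⟩ := exists_exit_of_reachOn hwalk' (Nat.zero_le n) (by simp only; omega)
  have := height_lt_of_disjoint_walks hdisj hz' hx' hwalk hexit rfl hx'z' rfl
  simp only at this
  omega

lemma exists_subset_column_of_strongOn {T : Set (ℕ × ℕ)} (hT : StrongOn archGrid T)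
    (hinf : T.Infinite) (hzero : ∀ v ∈ T, v.1 ≠ 0) :
    ∃ i, T ⊆ column i ∧ (column i \ T).Finite := by
  obtain ⟨u, hu⟩ := hinf.nonempty
  have hstair : StrongOn staircaseGrid T := fun v hv w hw =>
    (hT v hv w hw).mono subset_rfl fun _ _ b hb hab => hab.resolve_right fun ⟨_, _, _, hb₀⟩ =>
      hzero b hb (hb₀ ▸ rfl)
  have hcol : T ⊆ column u.1 := fun v hv => mem_column.2 <| le_antisymm
    (column_le_of_reachOn (hstair v hv u hu)) (column_le_of_reachOn (hstair u hu v hv))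
  refine ⟨u.1, hcol, ((Set.finite_Iic u.2).image (Prod.mk u.1)).subset ?_⟩
  rintro _ ⟨⟨k, rfl⟩, hk⟩
  refine ⟨k, Set.mem_Iic.2 (not_lt.1 fun huk => ?_), rfl⟩
  obtain ⟨k', hk', hkk'⟩ := (hinf.preimage hcol).exists_gt k
  exact hkk'.not_gt (height_lt_of_column_eq (hstair u hu _ hk') rfl hk huk)

lemma exists_eventually_mem_iff_mem_column {N : Set (ℕ × ℕ)} {H : ℕ → Set (ℕ × ℕ)}
    (hN : IsNecklaceWitness archGrid N H) (hfin : {k | (0, k) ∈ N}.Finite) :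
    ∃ i, ∀ᶠ v in cofinite, v ∈ N ↔ v ∈ column i := by
  obtain ⟨L, hL⟩ := eventually_atTop.1 <| eventually_forall_mem_of_cofinite hN.eventually_notMem
    (hfin.image (Prod.mk 0)).compl_mem_cofinite
  have hzero : ∀ v ∈ ⋃ l, H (L + l), v.1 ≠ 0 := by
    rintro ⟨_, k⟩ hv rfl
    obtain ⟨l, hl⟩ := Set.mem_iUnion.1 hv
    refine hL (L + l) (Nat.le_add_right L l) _ hl ⟨k, ?_, rfl⟩
    rw [hN.2.1]
    exact Set.mem_iUnion_of_mem _ hl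
  have htail := hN.tail L
  obtain ⟨i, hsub, hcofin⟩ := exists_subset_column_of_strongOn htail.strongOn htail.infinite hzero
  refine ⟨i, ?_⟩
  filter_upwards [hN.eventually_mem_iff_mem_tail L, hcofin.compl_mem_cofinite] with v hv hv'
  rw [hv]
  exact ⟨fun h => hsub h, fun h => by_contra fun hvT => hv' ⟨h, hvT⟩⟩

section disjointNecklaces

variable {neck : ℕ → Set (ℕ × ℕ)} {H : ℕ → ℕ → Set (ℕ × ℕ)}

lemma eventually_finite_column_zero (hneck : ∀ i, IsNecklaceWitness archGrid (neck i) (H i))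
    (hdisj : Pairwise (Function.onFun Disjoint neck)) :
    ∀ᶠ i in atTop, {k | (0, k) ∈ neck i}.Finite := by
  by_cases hinf : ∃ i, {k | (0, k) ∈ neck i}.Infinite
  · obtain ⟨i, hi⟩ := hinf
    filter_upwards [eventually_gt_atTop i] with j hij
    exact finite_column_zero_of_disjoint (hneck i).strongOn (hneck j).strongOn (hdisj hij.ne) hi
  · exact .of_forall fun i => Set.not_infinite.1 fun hi => hinf ⟨i, hi⟩

lemma exists_strictMono_columns (hneck : ∀ i, IsNecklaceWitness archGrid (neck i) (H i))
    (hdisj : Pairwise (Function.onFun Disjoint neck)) :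
    ∃ φ col : ℕ → ℕ, StrictMono φ ∧ StrictMono col ∧
      ∀ j, ∀ᶠ v in cofinite, v ∈ neck (φ j) ↔ v ∈ column (col j) := by
  obtain ⟨m, hm⟩ := eventually_atTop.1 (eventually_finite_column_zero hneck hdisj)
  choose col hcol using fun j =>
    exists_eventually_mem_iff_mem_column (hneck (m + j)) (hm (m + j) (Nat.le_add_right m j))
  have hinj : Function.Injective col := by
    intro i j hij
    by_contra hne
    have hcol_inf : (column (col i)).Infinite := (isNecklaceWitness_column (col i)).infinite
    obtain ⟨v, hv, hvi, hvj⟩ := ((frequently_cofinite_iff_infinite.2 hcol_inf).and_eventually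
      ((hcol i).and (hcol j))).exists
    exact Set.disjoint_left.1 (hdisj (by omega : m + i ≠ m + j)) (hvi.2 hv) (hvj.2 (hij ▸ hv))
  obtain ⟨ψ, hψ, hcolψ⟩ := strictMono_subseq_of_tendsto_atTop hinj.nat_tendsto_atTop
  exact ⟨fun j => m + ψ j, col ∘ ψ, hψ.const_add m, hcolψ, fun j => hcol (ψ j)⟩

end disjointNecklaces

/-! ### No bidirected necklace grid -/

lemma exists_mem_column_of_reachOn {R : Set (ℕ × ℕ)} {u v : ℕ × ℕ} {a : ℕ}
    (huv : ReachOn archGrid R u v) (hav : a < v.1) (hvu : v.1 < u.1) : ∃ w ∈ R, w ∈ column a := by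
  by_contra! hno
  have skip : ∀ w, ReachOn archGrid R u w → w.1 < a ∨ u.1 ≤ w.1 := by
    intro w huw
    induction huw with
    | refl => exact Or.inr le_rfl
    | @tail w w' _ hww' ih =>
      obtain ⟨-, hw'R, hww'⟩ := hww'
      have hw'a : w'.1 ≠ a := fun h => hno w' hw'R (mem_column.2 h)
      rcases hww' with (h | ⟨n, h⟩) | ⟨n, -, -, rfl⟩
      · omega
      · omega
      · left
        simp only at hw'a ⊢
        omega
  have := skip v huv
  omega

lemma not_isBidirNecklaceGrid_of_subgraph {B : Digraph (ℕ × ℕ)}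
    (hB : ∀ u v, B.Adj u v → archGrid.Adj u v) {neck : ℕ → Set (ℕ × ℕ)}
    {H : ℕ → ℕ → Set (ℕ × ℕ)} {Gird : ℕ → List (ℕ × ℕ)} :
    ¬ IsBidirNecklaceGrid B neck H Gird := by
  intro hgrid
  obtain ⟨φ, col, hφ, hcol, hneck⟩ :=
    exists_strictMono_columns (fun i => (hgrid.1.neckwit i).mono hB) fun i j => hgrid.1.disj i j
  obtain ⟨u, v, ⟨hu, hus⟩, ⟨hv, hvq⟩, huv⟩ := hgrid.exists_reachOn
    ((hneck 0).and ((hneck 1).and (hneck 2))) (hφ Nat.zero_lt_one) (hφ Nat.one_lt_two)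
  have hu_col : u.1 = col 2 := mem_column.1 (hu.2.2.1 hus)
  have hv_col : v.1 = col 1 := mem_column.1 (hv.2.1.1 hvq)
  obtain ⟨w, ⟨hw, hw_notMem⟩, hw_col⟩ :=
    exists_mem_column_of_reachOn (huv.mono subset_rfl fun a _ b _ => hB a b)
      (hv_col ▸ hcol Nat.zero_lt_one) (hv_col ▸ hu_col ▸ hcol Nat.one_lt_two)
  exact hw_notMem (hw.1.2 hw_col)

/-- Lemma 7.1: there exists an (outward-oriented) dominated directed necklace grid, with
vertical necklaces bidirected rays and arches single edges, containing no bidirected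
necklace grid as a subgraph. -/
theorem stmt14 : ∃ (V : Type) (G : Digraph V) (neck : ℕ → Set V)
    (H : ℕ → ℕ → Set V) (Gird : ℕ → List V) (r : ℕ → ℕ → V) (archE : ℕ → V × V),
    IsDomDirNecklaceGridOut G neck H Gird ∧
    NecksAreBidirRays G neck r ∧ ArchesAreEdges neck Gird archE ∧
    ¬ ∃ (B : Digraph V) (neck' : ℕ → Set V) (H' : ℕ → ℕ → Set V) (Gird' : ℕ → List V),
      (∀ u v, B.Adj u v → G.Adj u v) ∧ IsBidirNecklaceGrid B neck' H' Gird' := by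
  refine ⟨ℕ × ℕ, archGrid, column, columnPiece, girder, Prod.mk,
    fun n => ((n, 4 * n + 3), (0, 4 * n + 1)), isDomDirNecklaceGridOut_archGrid,
    necksAreBidirRays_archGrid, archesAreEdges_archGrid, ?_⟩
  rintro ⟨B, neck', H', Gird', hB, hgrid⟩
  exact not_isBidirNecklaceGrid_of_subgraph hB hgrid
end
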